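/- Let E be a rank two bundle on P^n with minimal monad 0 → A → P → B → 0 (A, B free), let N_t = H^t_*(E), A = H^0_*(A-bundle), B = H^0_*(B-bundle). For 2 ≤ t ≤ n-2 there is an exact sequence of graded S-modules A ⊗ N_t → H^t_*(Λ²P) → B ⊗ N_t, which is injective on the left if t ≥ 3 and N_{t-1} = 0, and surjective on the right if t ≤ n-3 and N_{t+1} = 0. -/

import Mathlib

/-!
Background setup (the paper works on projective space `ℙⁿ` over a field `K`):
we encode a coherent sheaf on `ℙⁿ_K` by a module `M` over the homogeneous coordinate
ring `S = K[X₀,…,Xₙ]` (namely `M = Γ_*` of the sheaf), and the intermediate cohomology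
module `H^i_*(F) = ⊕_ν H^i(ℙⁿ, F(ν))` (for `i ≥ 1`) by the local cohomology module
`H^{i+1}_𝔪(M)` at the irrelevant maximal ideal `𝔪 = (X₀,…,Xₙ)`, to which it is
canonically isomorphic.
-/

open CategoryTheory TensorProduct

noncomputable section

/-- The homogeneous coordinate ring `S = K[X₀,…,Xₙ]` of `ℙⁿ`. -/
abbrev PolyS (K : Type) [Field K] (n : ℕ) : Type := MvPolynomial (Fin (n+1)) K

variable (K : Type) [Field K] (n : ℕ)

/-- The irrelevant maximal ideal `𝔪 = (X₀,…,Xₙ)` of `S`. -/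
def irrel : Ideal (PolyS K n) := Ideal.span (Set.range MvPolynomial.X)

/-- `H^i_*` of the sheaf on `ℙⁿ` associated to the `S`-module `M`, encoded (for `i ≥ 1`)
as the local cohomology module `H^{i+1}_𝔪(M)`. -/
def Hstar (i : ℕ) (M : Type) [AddCommGroup M] [Module (PolyS K n) M] :
    ModuleCat (PolyS K n) :=
  (localCohomology (irrel K n) (i+1)).obj (ModuleCat.of (PolyS K n) M)

/-- `M` is (the module of sections `Γ_*` of) an algebraic vector bundle on `ℙⁿ`:
finitely generated, depth `≥ 2` at `𝔪` (i.e. `H⁰_𝔪(M) = H¹_𝔪(M) = 0`, so `M = Γ_*(M̃)`),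
and locally free at every prime other than the irrelevant ideal. -/
structure IsBundleModule (M : Type) [AddCommGroup M] [Module (PolyS K n) M] : Prop where
  finite : Module.Finite (PolyS K n) M
  h0 : Subsingleton ((localCohomology (irrel K n) 0).obj (ModuleCat.of (PolyS K n) M))
  h1 : Subsingleton ((localCohomology (irrel K n) 1).obj (ModuleCat.of (PolyS K n) M))
  locFree : ∀ p : PrimeSpectrum (PolyS K n), p.asIdeal ≠ irrel K n →
    Module.Free (Localization.AtPrime p.asIdeal) (LocalizedModule p.asIdeal.primeCompl M)

/-- `M` represents a vector bundle of rank two on `ℙⁿ`. -/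
structure IsRankTwoBundleModule (M : Type) [AddCommGroup M] [Module (PolyS K n) M]
    extends IsBundleModule K n M : Prop where
  rank2 : ∀ p : PrimeSpectrum (PolyS K n), p.asIdeal ≠ irrel K n →
    Module.rank (Localization.AtPrime p.asIdeal) (LocalizedModule p.asIdeal.primeCompl M) = 2

/-- A finite length module which is moreover supported at the irrelevant ideal: the
(ungraded avatar of the) notion of a *graded* `S`-module of finite length. -/
def IsGradedFiniteLength (N : Type) [AddCommGroup N] [Module (PolyS K n) N] : Prop :=
  IsFiniteLength (PolyS K n) N ∧
    ∃ c : ℕ, (irrel K n) ^ c ≤ Module.annihilator (PolyS K n) N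

/-- The cohomology `ker β / im α` of a monad `A --α--> P --β--> B`. -/
def MonadHomology {R A P B : Type} [CommRing R] [AddCommGroup A] [Module R A]
    [AddCommGroup P] [Module R P] [AddCommGroup B] [Module R B]
    (α : A →ₗ[R] P) (β : P →ₗ[R] B) : Type :=
  ↥(LinearMap.ker β) ⧸ (LinearMap.range α).comap (LinearMap.ker β).subtype

instance {R A P B : Type} [CommRing R] [AddCommGroup A] [Module R A]
    [AddCommGroup P] [Module R P] [AddCommGroup B] [Module R B]
    (α : A →ₗ[R] P) (β : P →ₗ[R] B) : AddCommGroup (MonadHomology α β) := by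
  unfold MonadHomology; infer_instance

instance {R A P B : Type} [CommRing R] [AddCommGroup A] [Module R A]
    [AddCommGroup P] [Module R P] [AddCommGroup B] [Module R B]
    (α : A →ₗ[R] P) (β : P →ₗ[R] B) : Module R (MonadHomology α β) := by
  unfold MonadHomology; infer_instance

/-- A linear map of `S`-modules which becomes an isomorphism of the associated sheaves
on `ℙⁿ`: its kernel and cokernel are annihilated by a power of the irrelevant ideal. -/
def IsSheafIso {M N' : Type} [AddCommGroup M] [Module (PolyS K n) M]
    [AddCommGroup N'] [Module (PolyS K n) N'] (f : M →ₗ[PolyS K n] N') : Prop :=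
  (∃ c : ℕ, (irrel K n) ^ c ≤ Module.annihilator (PolyS K n) ↥(LinearMap.ker f)) ∧
  (∃ c : ℕ, (irrel K n) ^ c ≤ Module.annihilator (PolyS K n) (N' ⧸ LinearMap.range f))

section
section Part1
open CategoryTheory Limits Opposite


namespace LCAux
universe u
variable {R : Type u} [CommRing R]

/-- The map of Hom complexes induced by a map of the target. -/
def lyMapY (X : ChainComplex (ModuleCat.{u} R) ℕ) {Y Y' : ModuleCat.{u} R} (g : Y ⟶ Y') :
    X.linearYonedaObj R Y ⟶ X.linearYonedaObj R Y' :=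
  (HomologicalComplex.unopFunctor _ _).map
    ((NatTrans.mapHomologicalComplex (NatTrans.rightOp ((linearYoneda R (ModuleCat.{u} R)).map g))
      (ComplexShape.down ℕ)).app X).op

/-- The map of Hom complexes induced by a map of the source. -/
def lyMapX {X X' : ChainComplex (ModuleCat.{u} R) ℕ} (φ : X ⟶ X') (Y : ModuleCat.{u} R) :
    X'.linearYonedaObj R Y ⟶ X.linearYonedaObj R Y :=
  (HomologicalComplex.unopFunctor _ _).map
   (((((linearYoneda R (ModuleCat.{u} R)).obj Y).rightOp.mapHomologicalComplex
    (ComplexShape.down ℕ)).map φ).op)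

lemma lyMapY_f (X : ChainComplex (ModuleCat.{u} R) ℕ) {Y Y' : ModuleCat.{u} R} (g : Y ⟶ Y')
    (i : ℕ) : (lyMapY X g).f i = ((linearYoneda R (ModuleCat.{u} R)).map g).app (op (X.X i)) := rfl

lemma lyMapX_f {X X' : ChainComplex (ModuleCat.{u} R) ℕ} (φ : X ⟶ X') (Y : ModuleCat.{u} R)
    (i : ℕ) : (lyMapX φ Y).f i = ((linearYoneda R (ModuleCat.{u} R)).obj Y).map (φ.f i).op := rfl

lemma sq_inv {V : Type*} [Category V] {a b a' b' : V} (e : a ≅ b) (e' : a' ≅ b') (f : b ⟶ b')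
    (g : a ⟶ a') (h : e.hom ≫ f = g ≫ e'.hom) : f ≫ e'.inv = e.inv ≫ g := by
  rw [Iso.comp_inv_eq, Category.assoc, Iso.eq_inv_comp, h]

lemma homologyUnop_nat {V : Type*} [Category V] [Abelian V] {ι : Type*} {c : ComplexShape ι}
    {K L : HomologicalComplex Vᵒᵖ c} (φ : K ⟶ L) (i : ι) :
    (HomologicalComplex.homologyMap φ i).unop ≫ (HomologicalComplex.homologyUnop K i).inv =
    (HomologicalComplex.homologyUnop L i).inv ≫
      HomologicalComplex.homologyMap ((HomologicalComplex.unopFunctor V c).map φ.op) i := by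
  have h := congrArg Quiver.Hom.unop (HomologicalComplex.homologyOp_hom_naturality
    ((HomologicalComplex.unopFunctor V c).map φ.op) i)
  exact sq_inv (HomologicalComplex.homologyUnop L i) (HomologicalComplex.homologyUnop K i) _ _ h

/-- Naturality of `isoExt` in the target. -/
lemma isoExt_natY {X : ModuleCat.{u} R} (P : ProjectiveResolution X) (n : ℕ)
    {Y Y' : ModuleCat.{u} R} (g : Y ⟶ Y') :
    ((Ext R (ModuleCat.{u} R) n).obj (op X)).map g ≫ (P.isoExt (R := R) n Y').hom =
    (P.isoExt (R := R) n Y).hom ≫ HomologicalComplex.homologyMap (lyMapY P.complex g) n := by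
  have h : (P.isoLeftDerivedObj ((linearYoneda R (ModuleCat.{u} R)).obj Y').rightOp n).inv ≫
      (NatTrans.leftDerived (NatTrans.rightOp ((linearYoneda R (ModuleCat.{u} R)).map g)) n).app
      X = _ ≫ (P.isoLeftDerivedObj ((linearYoneda R (ModuleCat.{u} R)).obj Y).rightOp n).inv :=
    (Iso.inv_comp_eq _).2 (ProjectiveResolution.leftDerived_app_eq
    (NatTrans.rightOp ((linearYoneda R (ModuleCat.{u} R)).map g)) P n)
  have h' := congrArg Quiver.Hom.unop h
  have h1 : ((Ext R (ModuleCat.{u} R) n).obj (op X)).map g =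
    ((NatTrans.leftDerived (NatTrans.rightOp ((linearYoneda R (ModuleCat.{u} R)).map g)) n).app
      X).unop := rfl
  have h2 := homologyUnop_nat ((NatTrans.mapHomologicalComplex (NatTrans.rightOp
    ((linearYoneda R (ModuleCat.{u} R)).map g)) (ComplexShape.down ℕ)).app P.complex) n
  rw [h1]
  simp only [unop_comp] at h'
  simp only [ProjectiveResolution.isoExt]
  erw [reassoc_of% h', h2]
  rfl

/-- Naturality of `isoExt` in the source. -/
lemma isoExt_natX {X X' : ModuleCat.{u} R} (P : ProjectiveResolution X)
    (P' : ProjectiveResolution X') (f : X ⟶ X') (φ : P.complex ⟶ P'.complex)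
    (comm : φ.f 0 ≫ P'.π.f 0 = P.π.f 0 ≫ f) (n : ℕ)
    (Y : ModuleCat.{u} R) :
    ((Ext R (ModuleCat.{u} R) n).map f.op).app Y ≫ (P.isoExt (R := R) n Y).hom =
    (P'.isoExt (R := R) n Y).hom ≫ HomologicalComplex.homologyMap (lyMapX φ Y) n := by
  have h := ProjectiveResolution.isoLeftDerivedObj_inv_naturality f P P' φ comm
    ((linearYoneda R (ModuleCat.{u} R)).obj Y).rightOp n
  have h' := congrArg Quiver.Hom.unop h
  have h1 : ((Ext R (ModuleCat.{u} R) n).map f.op).app Y =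
    ((((linearYoneda R (ModuleCat.{u} R)).obj Y).rightOp.leftDerived n).map f).unop := rfl
  have h2 := homologyUnop_nat ((((linearYoneda R (ModuleCat.{u} R)).obj Y).rightOp.mapHomologicalComplex
    (ComplexShape.down ℕ)).map φ) n
  rw [h1]
  simp only [unop_comp] at h'
  simp only [ProjectiveResolution.isoExt]
  erw [reassoc_of% h', h2]
  rfl

end LCAux
end Part1

section Part2
open CategoryTheory Limits Opposite


namespace LCAux
universe u
variable {R : Type u} [CommRing R]

lemma fexact_of_iso {A B C A' B' C' : ModuleCat.{u} R} (f : A ⟶ B) (g : B ⟶ C)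
    (f' : A' ⟶ B') (g' : B' ⟶ C') (e1 : A ≅ A') (e2 : B ≅ B') (e3 : C ≅ C')
    (h1 : f ≫ e2.hom = e1.hom ≫ f') (h2 : g ≫ e3.hom = e2.hom ≫ g') (w : f' ≫ g' = 0)
    (hex : (ShortComplex.mk f' g' w).Exact) : Function.Exact f g := by
  have w' : f ≫ g = 0 := by
    rw [← cancel_mono e3.hom, Category.assoc, h2, reassoc_of% h1, w]; simp
  have : (ShortComplex.mk f g w').Exact :=
    (ShortComplex.exact_iff_of_iso (ShortComplex.isoMk e1 e2 e3 h1.symm h2.symm)).2 hex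
  exact (ShortComplex.ShortExact.moduleCat_exact_iff_function_exact _).1 this

lemma lyMapY_comp (X : ChainComplex (ModuleCat.{u} R) ℕ) {Y Y' Y'' : ModuleCat.{u} R} (g : Y ⟶ Y')
    (h : Y' ⟶ Y'') : lyMapY X (g ≫ h) = lyMapY X g ≫ lyMapY X h := by
  ext i x
  rfl

lemma lyMapY_apply (X : ChainComplex (ModuleCat.{u} R) ℕ) {Y Y' : ModuleCat.{u} R} (g : Y ⟶ Y')
    (i : ℕ) (x : X.X i ⟶ Y) : (lyMapY X g).f i x = x ≫ g := rfl

lemma lyMapX_apply {X X' : ChainComplex (ModuleCat.{u} R) ℕ} (φ : X ⟶ X') (Y : ModuleCat.{u} R)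
    (i : ℕ) (x : X'.X i ⟶ Y) : (lyMapX φ Y).f i x = φ.f i ≫ x := rfl

lemma ly_d_apply (X : ChainComplex (ModuleCat.{u} R) ℕ) (Y : ModuleCat.{u} R)
    (i j : ℕ) (x : X.X i ⟶ Y) : (X.linearYonedaObj R Y).d i j x = X.d j i ≫ x := rfl

lemma lyMapY_zero (X : ChainComplex (ModuleCat.{u} R) ℕ) (Y Y' : ModuleCat.{u} R) :
    lyMapY X (0 : Y ⟶ Y') = 0 := by
  ext i x
  exact comp_zero (f := (x : X.X i ⟶ Y))

lemma lyMapY_add (X : ChainComplex (ModuleCat.{u} R) ℕ) {Y Y' : ModuleCat.{u} R} (g h : Y ⟶ Y') :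
    lyMapY X (g + h) = lyMapY X g + lyMapY X h := by
  ext i x
  exact Preadditive.comp_add _ _ _ (x : X.X i ⟶ Y) g h

lemma lyMapY_smul (X : ChainComplex (ModuleCat.{u} R) ℕ) {Y Y' : ModuleCat.{u} R} (r : R)
    (g : Y ⟶ Y') : lyMapY X (r • g) = r • lyMapY X g := by
  ext i x
  exact Linear.comp_smul _ _ _ (x : X.X i ⟶ Y) r g

lemma lyMapX_smul_id (X : ChainComplex (ModuleCat.{u} R) ℕ) (Y : ModuleCat.{u} R) (r : R) :
    lyMapX (r • 𝟙 X) Y = r • 𝟙 _ := by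
  ext i x
  have : (r • 𝟙 (X.X i)) ≫ (show X.X i ⟶ Y from x) = r • (show X.X i ⟶ Y from x) := by
    rw [Linear.smul_comp, Category.id_comp]
  exact this

lemma lyMapX_zero (X X' : ChainComplex (ModuleCat.{u} R) ℕ) (Y : ModuleCat.{u} R) :
    lyMapX (0 : X ⟶ X') Y = 0 := by
  ext i x
  exact zero_comp (f := (x : X'.X i ⟶ Y))

/-- The short complex of Hom complexes. -/
def lySC (X : ChainComplex (ModuleCat.{u} R) ℕ) (S : ShortComplex (ModuleCat.{u} R)) :
    ShortComplex (CochainComplex (ModuleCat.{u} R) ℕ) :=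
  ShortComplex.mk (lyMapY X S.f) (lyMapY X S.g) (by rw [← lyMapY_comp, S.zero, lyMapY_zero])

lemma lySC_shortExact {Z : ModuleCat.{u} R} (P : ProjectiveResolution Z)
    (S : ShortComplex (ModuleCat.{u} R)) (hS : S.ShortExact) :
    (lySC P.complex S).ShortExact := by
  apply HomologicalComplex.shortExact_of_degreewise_shortExact
  intro i
  have := hS.mono_f
  have := hS.epi_g
  refine ShortComplex.ShortExact.mk' ?_ ?_ ?_
  · rw [ShortComplex.ShortExact.moduleCat_exact_iff_function_exact]
    intro x
    constructor
    · intro hx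
      exact ⟨hS.exact.lift (x : P.complex.X i ⟶ S.X₂) hx, hS.exact.lift_f _ _⟩
    · rintro ⟨y, rfl⟩
      have : ∀ y : P.complex.X i ⟶ S.X₁, (y ≫ S.f) ≫ S.g = 0 := fun y ↦ by simp
      exact this y
  · rw [ModuleCat.mono_iff_injective]
    intro x y h
    exact (cancel_mono S.f).1 h
  · rw [ModuleCat.epi_iff_surjective]
    intro x
    have h : Projective.factorThru (show P.complex.X i ⟶ S.X₃ from x) S.g ≫ S.g = x :=
      Projective.factorThru_comp _ _
    exact ⟨Projective.factorThru (show P.complex.X i ⟶ S.X₃ from x) S.g, h⟩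

/-- The morphism of short complexes of Hom complexes induced by a chain map. -/
def lySCMap {X X' : ChainComplex (ModuleCat.{u} R) ℕ} (φ : X ⟶ X')
    (S : ShortComplex (ModuleCat.{u} R)) : lySC X' S ⟶ lySC X S where
  τ₁ := lyMapX φ S.X₁
  τ₂ := lyMapX φ S.X₂
  τ₃ := lyMapX φ S.X₃
  comm₁₂ := by ext i x; rfl
  comm₂₃ := by ext i x; rfl

/-- Connecting map on the homology of Hom complexes. -/
def lyδ {Z : ModuleCat.{u} R} (P : ProjectiveResolution Z)
    (S : ShortComplex (ModuleCat.{u} R)) (hS : S.ShortExact) (n : ℕ) :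
    (P.complex.linearYonedaObj R S.X₃).homology n ⟶
      (P.complex.linearYonedaObj R S.X₁).homology (n + 1) :=
  (lySC_shortExact P S hS).δ n (n + 1) rfl

lemma lyδ_nat {Z Z' : ModuleCat.{u} R} (P : ProjectiveResolution Z) (P' : ProjectiveResolution Z')
    (φ : P.complex ⟶ P'.complex) (S : ShortComplex (ModuleCat.{u} R)) (hS : S.ShortExact) (n : ℕ) :
    HomologicalComplex.homologyMap (lyMapX φ S.X₃) n ≫ lyδ P S hS n =
      lyδ P' S hS n ≫ HomologicalComplex.homologyMap (lyMapX φ S.X₁) (n + 1) :=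
  (HomologicalComplex.HomologySequence.δ_naturality (lySCMap φ S)
    (lySC_shortExact P' S hS) (lySC_shortExact P S hS) n (n + 1) rfl).symm

/-- Connecting map for `Ext`. -/
def extδ (X : ModuleCat.{u} R) (S : ShortComplex (ModuleCat.{u} R)) (hS : S.ShortExact) (n : ℕ) :
    ((Ext R (ModuleCat.{u} R) n).obj (op X)).obj S.X₃ ⟶
    ((Ext R (ModuleCat.{u} R) (n + 1)).obj (op X)).obj S.X₁ :=
  ((projectiveResolution X).isoExt n S.X₃).hom ≫
    lyδ (projectiveResolution X) S hS n ≫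
    ((projectiveResolution X).isoExt (n + 1) S.X₁).inv

lemma ext_exact₂ (X : ModuleCat.{u} R) (S : ShortComplex (ModuleCat.{u} R)) (hS : S.ShortExact)
    (n : ℕ) : Function.Exact (((Ext R (ModuleCat.{u} R) n).obj (op X)).map S.f)
      (((Ext R (ModuleCat.{u} R) n).obj (op X)).map S.g) :=
  fexact_of_iso _ _ _ _ _ _ _ (isoExt_natY (projectiveResolution X) n S.f)
    (isoExt_natY (projectiveResolution X) n S.g) _
    ((lySC_shortExact (projectiveResolution X) S hS).homology_exact₂ n)

lemma ext_exact₃ (X : ModuleCat.{u} R) (S : ShortComplex (ModuleCat.{u} R)) (hS : S.ShortExact)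
    (n : ℕ) : Function.Exact (((Ext R (ModuleCat.{u} R) n).obj (op X)).map S.g)
      (extδ X S hS n) :=
  fexact_of_iso _ _ _ _ _ _ ((projectiveResolution X).isoExt (n + 1) S.X₁)
    (isoExt_natY (projectiveResolution X) n S.g) (by simp [extδ]; rfl) _
    ((lySC_shortExact (projectiveResolution X) S hS).homology_exact₃ n (n+1) rfl)

lemma ext_exact₁ (X : ModuleCat.{u} R) (S : ShortComplex (ModuleCat.{u} R)) (hS : S.ShortExact)
    (n : ℕ) : Function.Exact (extδ X S hS n)
      (((Ext R (ModuleCat.{u} R) (n + 1)).obj (op X)).map S.f) :=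
  fexact_of_iso _ _ _ _ ((projectiveResolution X).isoExt n S.X₃) _ _
     (by simp [extδ]; rfl) (isoExt_natY (projectiveResolution X) (n + 1) S.f) _
    ((lySC_shortExact (projectiveResolution X) S hS).homology_exact₁ n (n+1) rfl)

lemma extδ_nat {X X' : ModuleCat.{u} R} (f : X ⟶ X')
    (S : ShortComplex (ModuleCat.{u} R)) (hS : S.ShortExact) (n : ℕ) :
    ((Ext R (ModuleCat.{u} R) n).map f.op).app S.X₃ ≫ extδ X S hS n =
    extδ X' S hS n ≫ ((Ext R (ModuleCat.{u} R) (n + 1)).map f.op).app S.X₁ := by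
  have hφ := ProjectiveResolution.lift_commutes_zero f
    (projectiveResolution X) (projectiveResolution X')
  have h1 := isoExt_natX _ _ f _ hφ n S.X₃
  have h2 := isoExt_natX _ _ f _ hφ (n+1) S.X₁
  have h3 := lyδ_nat _ _ (ProjectiveResolution.lift f
    (projectiveResolution X) (projectiveResolution X')) S hS n
  rw [← cancel_mono ((projectiveResolution X).isoExt (R := R) (n+1) S.X₁).hom]
  simp only [extδ, Category.assoc, h2, Iso.inv_hom_id, Iso.inv_hom_id_assoc,
    Category.comp_id]
  rw [reassoc_of% h1, h3]

end LCAux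
end Part2

section Part3
open CategoryTheory Limits Opposite


namespace LCAux
universe u
variable {R : Type u} [CommRing R]

lemma ext_map_add (X : ModuleCat.{u} R) (n : ℕ) {Y Y' : ModuleCat.{u} R} (g h : Y ⟶ Y') :
    ((Ext R (ModuleCat.{u} R) n).obj (op X)).map (g + h) =
    ((Ext R (ModuleCat.{u} R) n).obj (op X)).map g +
    ((Ext R (ModuleCat.{u} R) n).obj (op X)).map h := by
  rw [← cancel_mono ((projectiveResolution X).isoExt (R := R) n Y').hom, isoExt_natY,
    Preadditive.add_comp, isoExt_natY, isoExt_natY, lyMapY_add, HomologicalComplex.homologyMap_add,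
    Preadditive.comp_add]

lemma homologyMap_smul' {ι : Type*} {c : ComplexShape ι} {X Y : HomologicalComplex (ModuleCat.{u} R) c}
    (r : R) (φ : X ⟶ Y) (i : ι) : HomologicalComplex.homologyMap (r • φ) i =
      r • HomologicalComplex.homologyMap φ i :=
  ShortComplex.homologyMap_smul (((HomologicalComplex.shortComplexFunctor _ c i).map φ)) r

lemma ext_map_smul (X : ModuleCat.{u} R) (n : ℕ) {Y Y' : ModuleCat.{u} R} (r : R) (g : Y ⟶ Y') :
    ((Ext R (ModuleCat.{u} R) n).obj (op X)).map (r • g) =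
    r • ((Ext R (ModuleCat.{u} R) n).obj (op X)).map g := by
  rw [← cancel_mono ((projectiveResolution X).isoExt (R := R) n Y').hom, isoExt_natY,
    Linear.smul_comp, isoExt_natY, lyMapY_smul, homologyMap_smul',
    Linear.comp_smul]

lemma ext_smul_eq_zero (X : ModuleCat.{u} R) (n : ℕ) (Y : ModuleCat.{u} R) (r : R)
    (hr : r • 𝟙 X = 0) (z : ((Ext R (ModuleCat.{u} R) n).obj (op X)).obj Y) : r • z = 0 := by
  let P := projectiveResolution X
  have h1 := isoExt_natX P P (r • 𝟙 X) (r • 𝟙 P.complex) (by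
    simp only [HomologicalComplex.smul_f_apply, HomologicalComplex.id_f]
    rw [Linear.smul_comp, Category.id_comp]
    exact ((Linear.comp_smul _ _ _ (P.π.f 0) r (𝟙 X)).trans (congrArg (r • ·) (Category.comp_id (show P.complex.X 0 ⟶ X from P.π.f 0)))).symm) n Y
  have h2 := isoExt_natX P P (r • 𝟙 X) 0 (by
    rw [hr]; simp only [HomologicalComplex.zero_f, zero_comp]; exact comp_zero.symm) n Y
  rw [h1, lyMapX_smul_id, lyMapX_zero, homologyMap_smul',
    HomologicalComplex.homologyMap_id, HomologicalComplex.homologyMap_zero, comp_zero,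
    Linear.comp_smul, Category.comp_id] at h2
  have h3 := ConcreteCategory.congr_hom h2 z
  apply (ModuleCat.mono_iff_injective (P.isoExt (R := R) n Y).hom).1 inferInstance
  rw [map_smul, map_zero]
  exact h3

lemma ext_injective (X : ModuleCat.{u} R) (n : ℕ) (I : ModuleCat.{u} R) [Injective I] :
    Subsingleton (((Ext R (ModuleCat.{u} R) (n + 1)).obj (op X)).obj I) := by
  let P := projectiveResolution X
  have : IsZero (((Ext R (ModuleCat.{u} R) (n + 1)).obj (op X)).obj I) := by
    refine IsZero.of_iso ?_ (P.isoExt (n + 1) I)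
    rw [← HomologicalComplex.exactAt_iff_isZero_homology,
      HomologicalComplex.exactAt_iff' _ n (n+1) (n+2) (by simp) (by simp),
      ShortComplex.ShortExact.moduleCat_exact_iff_function_exact]
    intro x
    constructor
    · intro hx
      exact ⟨(P.exact_succ n).descToInjective (show P.complex.X (n+1) ⟶ I from x) hx,
        (P.exact_succ n).comp_descToInjective _ _⟩
    · rintro ⟨y, rfl⟩
      have : ∀ y : P.complex.X n ⟶ I, P.complex.d (n+2) (n+1) ≫ P.complex.d (n+1) n ≫ y = 0 :=
        fun y ↦ by simp
      exact this y
  exact ModuleCat.subsingleton_of_isZero this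

/-- The augmentation of a projective resolution. -/
def aug {X : ModuleCat.{u} R} (P : ProjectiveResolution X) : P.complex.X 0 ⟶ X := P.π.f 0

lemma aug_d {X : ModuleCat.{u} R} (P : ProjectiveResolution X) : P.complex.d 1 0 ≫ aug P = 0 :=
  P.complex_d_comp_π_f_zero

lemma aug_epi {X : ModuleCat.{u} R} (P : ProjectiveResolution X) : Epi (aug P) :=
  inferInstanceAs (Epi (P.π.f 0))

lemma aug_exact {X : ModuleCat.{u} R} (P : ProjectiveResolution X) :
    (ShortComplex.mk _ _ (aug_d P)).Exact := P.exact₀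

/-- The canonical map from `Hom(X, Y)` to the cocycles of degree zero of `Hom(P, Y)`. -/
def ly0 {X : ModuleCat.{u} R} (P : ProjectiveResolution X) (Y : ModuleCat.{u} R) :
    ((linearYoneda R (ModuleCat.{u} R)).obj Y).obj (op X) ⟶
      (P.complex.linearYonedaObj R Y).cycles 0 :=
  (P.complex.linearYonedaObj R Y).liftCycles
    (((linearYoneda R (ModuleCat.{u} R)).obj Y).map (aug P).op) 1
    (by simp) (by
      ext h
      have : ∀ h : X ⟶ Y, P.complex.d 1 0 ≫ aug P ≫ h = 0 :=
        fun h ↦ by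
          rw [reassoc_of% (aug_d P), zero_comp]
      exact this h)

lemma ly0_i {X : ModuleCat.{u} R} (P : ProjectiveResolution X) (Y : ModuleCat.{u} R) :
    ly0 P Y ≫ (P.complex.linearYonedaObj R Y).iCycles 0 =
    ((linearYoneda R (ModuleCat.{u} R)).obj Y).map (aug P).op :=
  HomologicalComplex.liftCycles_i _ _ _ _ _

lemma ly0_surj {X : ModuleCat.{u} R} (P : ProjectiveResolution X) (Y : ModuleCat.{u} R) :
    Function.Surjective (ly0 P Y) := by
  intro z
  have hz : (P.complex.linearYonedaObj R Y).d 0 1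
    ((P.complex.linearYonedaObj R Y).iCycles 0 z) = 0 := by
    rw [← ConcreteCategory.comp_apply, HomologicalComplex.iCycles_d]; rfl
  have := aug_epi P
  refine ⟨(aug_exact P).desc
    (show P.complex.X 0 ⟶ Y from (P.complex.linearYonedaObj R Y).iCycles 0 z) hz, ?_⟩
  apply (ModuleCat.mono_iff_injective ((P.complex.linearYonedaObj R Y).iCycles 0)).1 inferInstance
  exact (ConcreteCategory.congr_hom (ly0_i P Y) _).trans ((aug_exact P).g_desc _ _)

lemma homologyπ0_surj (C : CochainComplex (ModuleCat.{u} R) ℕ) :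
    Function.Surjective (C.homologyπ 0) :=
  (ModuleCat.epi_iff_surjective _).1 inferInstance

/-- The canonical map `Hom(X, Y) → Ext⁰(X, Y)`. -/
def ext0 (X Y : ModuleCat.{u} R) : ((linearYoneda R (ModuleCat.{u} R)).obj Y).obj (op X) ⟶
    ((Ext R (ModuleCat.{u} R) 0).obj (op X)).obj Y :=
  ly0 (projectiveResolution X) Y ≫
    ((projectiveResolution X).complex.linearYonedaObj R Y).homologyπ 0 ≫
    ((projectiveResolution X).isoExt (R := R) 0 Y).inv

lemma ext0_surj (X Y : ModuleCat.{u} R) : Function.Surjective (ext0 X Y) := by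
  have h := ((ModuleCat.epi_iff_surjective
    ((projectiveResolution X).isoExt (R := R) 0 Y).inv).1 inferInstance).comp
    ((homologyπ0_surj _).comp (ly0_surj (projectiveResolution X) Y))
  exact h

lemma ext0_natY (X : ModuleCat.{u} R) {Y Y' : ModuleCat.{u} R} (g : Y ⟶ Y') :
    ext0 X Y ≫ ((Ext R (ModuleCat.{u} R) 0).obj (op X)).map g =
    ((linearYoneda R (ModuleCat.{u} R)).map g).app (op X) ≫ ext0 X Y' := by
  rw [← cancel_mono ((projectiveResolution X).isoExt (R := R) 0 Y').hom, Category.assoc,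
    isoExt_natY]
  simp only [ext0, Category.assoc, Iso.inv_hom_id, Iso.inv_hom_id_assoc, Category.comp_id,
    HomologicalComplex.homologyπ_naturality]
  rw [← Category.assoc, ← Category.assoc]
  congr 1
  rw [← cancel_mono (((projectiveResolution X).complex.linearYonedaObj R Y').iCycles 0)]
  rw [Category.assoc, Category.assoc, HomologicalComplex.cyclesMap_i, ly0_i,
    ← Category.assoc, ly0_i]
  ext x
  rfl

lemma ext0_natX {X X' : ModuleCat.{u} R} (f : X ⟶ X') (Y : ModuleCat.{u} R) :
    ext0 X' Y ≫ ((Ext R (ModuleCat.{u} R) 0).map f.op).app Y =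
    ((linearYoneda R (ModuleCat.{u} R)).obj Y).map f.op ≫ ext0 X Y := by
  have hφ := ProjectiveResolution.lift_commutes_zero f
    (projectiveResolution X) (projectiveResolution X')
  have h1 := isoExt_natX _ _ f _ hφ 0 Y
  rw [← cancel_mono ((projectiveResolution X).isoExt (R := R) 0 Y).hom, Category.assoc, h1]
  simp only [ext0, Category.assoc, Iso.inv_hom_id, Iso.inv_hom_id_assoc, Category.comp_id,
    HomologicalComplex.homologyπ_naturality]
  rw [← Category.assoc, ← Category.assoc]
  congr 1
  rw [← cancel_mono (((projectiveResolution X).complex.linearYonedaObj R Y).iCycles 0)]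
  rw [Category.assoc, Category.assoc, HomologicalComplex.cyclesMap_i, ly0_i,
    ← Category.assoc, ly0_i]
  ext x
  have := congrArg (fun g ↦ g ≫ (show X' ⟶ Y from x)) hφ
  simp only [Category.assoc] at this
  exact this

end LCAux
end Part3

section Part4
open CategoryTheory Limits Opposite


namespace LCAux

variable {R : Type} [CommRing R] (J : Ideal R)

/-- The module `R / J ^ t`. -/
abbrev qm (t : ℕ) : ModuleCat.{0} R := ModuleCat.of R (R ⧸ J ^ t)

/-- The projection `R / J ^ t ⟶ R / J ^ s` for `s ≤ t`. -/
def qmap {s t : ℕ} (h : s ≤ t) : qm J t ⟶ qm J s :=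
  (localCohomology.ringModIdeals (localCohomology.idealPowersDiagram J)).map (homOfLE h).op

lemma qmap_mk {s t : ℕ} (h : s ≤ t) (r : R) :
    qmap J h (Ideal.Quotient.mk (J ^ t) r) = Ideal.Quotient.mk (J ^ s) r := rfl

/-- The Ext modules in the definition of local cohomology. -/
abbrev eM (i t : ℕ) (M : ModuleCat.{0} R) : ModuleCat.{0} R :=
  ((Ext R (ModuleCat.{0} R) i).obj (op (qm J t))).obj M

/-- Functoriality of `eM`. -/
abbrev eMap (i t : ℕ) {M N : ModuleCat.{0} R} (g : M ⟶ N) : eM J i t M ⟶ eM J i t N :=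
  ((Ext R (ModuleCat.{0} R) i).obj (op (qm J t))).map g

/-- Transition maps. -/
abbrev eTr (i : ℕ) {s t : ℕ} (h : s ≤ t) (M : ModuleCat.{0} R) : eM J i s M ⟶ eM J i t M :=
  ((Ext R (ModuleCat.{0} R) i).map (qmap J h).op).app M

/-- The diagram evaluated at `M`. -/
abbrev eDiag (i : ℕ) (M : ModuleCat.{0} R) : ℕᵒᵖᵒᵖ ⥤ ModuleCat.{0} R :=
  localCohomology.diagram (localCohomology.idealPowersDiagram J) i ⋙ (evaluation _ _).obj M

instance : HasColimit (localCohomology.diagram (localCohomology.idealPowersDiagram J) i) :=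
  localCohomology.hasColimitDiagram _ i

/-- The colimit cocone evaluated at `M`. -/
def eCocone (i : ℕ) (M : ModuleCat.{0} R) : Cocone (eDiag J i M) :=
  ((evaluation _ _).obj M).mapCocone
    (colimit.cocone (localCohomology.diagram (localCohomology.idealPowersDiagram J) i))

/-- The evaluated cocone is colimiting. -/
def eIsColimit (i : ℕ) (M : ModuleCat.{0} R) : IsColimit (eCocone J i M) :=
  isColimitOfPreserves ((evaluation _ _).obj M) (colimit.isColimit _)

/-- The structure maps to local cohomology. -/
def lcι (i t : ℕ) (M : ModuleCat.{0} R) : eM J i t M ⟶ (localCohomology J i).obj M :=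
  (colimit.ι (localCohomology.diagram (localCohomology.idealPowersDiagram J) i) (op (op t))).app M

lemma lcι_nat (i t : ℕ) {M N : ModuleCat.{0} R} (g : M ⟶ N) :
    lcι J i t M ≫ (localCohomology J i).map g = eMap J i t g ≫ lcι J i t N :=
  ((colimit.ι (localCohomology.diagram (localCohomology.idealPowersDiagram J) i)
    (op (op t))).naturality g).symm

lemma lcι_tr (i : ℕ) {s t : ℕ} (h : s ≤ t) (M : ModuleCat.{0} R) :
    eTr J i h M ≫ lcι J i t M = lcι J i s M :=
  (eCocone J i M).w (homOfLE h).op.op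

lemma lcι_surj (i : ℕ) (M : ModuleCat.{0} R) (x : (localCohomology J i).obj M) :
    ∃ t y, lcι J i t M y = x := by
  obtain ⟨t, y, h⟩ := Concrete.isColimit_exists_rep _ (eIsColimit J i M) x
  exact ⟨t.unop.unop, y, h⟩

lemma lcι_eq_zero (i t : ℕ) (M : ModuleCat.{0} R) (y : eM J i t M) (hy : lcι J i t M y = 0) :
    ∃ (t' : ℕ) (h : t ≤ t'), eTr J i h M y = 0 := by
  obtain ⟨t', f, g, h⟩ := Concrete.isColimit_exists_of_rep_eq (eDiag J i M) (eIsColimit J i M)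
    (i := op (op t)) (j := op (op t)) y (0 : eM J i t M) (hy.trans (map_zero _).symm)
  exact ⟨t'.unop.unop, leOfHom f.unop.unop, h.trans (map_zero _)⟩

/-- Constructing maps out of local cohomology. -/
lemma lc_desc (i : ℕ) (M N : ModuleCat.{0} R) (φ : ∀ t, eM J i t M ⟶ N)
    (hφ : ∀ s t (h : s ≤ t), eTr J i h M ≫ φ t = φ s) :
    ∃ ψ : (localCohomology J i).obj M ⟶ N, ∀ t, lcι J i t M ≫ ψ = φ t := by
  let c : Cocone (eDiag J i M) :=
    { pt := N
      ι := { app := fun t ↦ φ t.unop.unop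
             naturality := fun s t f ↦
              (hφ _ _ (leOfHom f.unop.unop)).trans (Category.comp_id _).symm } }
  exact ⟨(eIsColimit J i M).desc c, fun t ↦ (eIsColimit J i M).fac c (op (op t))⟩

end LCAux
end Part4

section Part5
open CategoryTheory Limits Opposite


namespace LCAux
variable {R : Type} [CommRing R] (J : Ideal R)

/-- Local cohomology of an unbundled module. -/
abbrev HL (i : ℕ) (M : Type) [AddCommGroup M] [Module R M] : Type :=
  (localCohomology J i).obj (ModuleCat.of R M)

variable {M N L : Type} [AddCommGroup M] [Module R M] [AddCommGroup N] [Module R N]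
  [AddCommGroup L] [Module R L]

/-- Functoriality of local cohomology. -/
def Hm (i : ℕ) (f : M →ₗ[R] N) : HL J i M →ₗ[R] HL J i N :=
  ((localCohomology J i).map (ModuleCat.ofHom f)).hom

lemma Hm_comp (i : ℕ) (f : M →ₗ[R] N) (g : N →ₗ[R] L) :
    Hm J i (g ∘ₗ f) = Hm J i g ∘ₗ Hm J i f := by
  unfold Hm
  rw [ModuleCat.ofHom_comp, Functor.map_comp]; rfl

lemma Hm_comp_apply (i : ℕ) (f : M →ₗ[R] N) (g : N →ₗ[R] L) (x : HL J i M) :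
    Hm J i (g ∘ₗ f) x = Hm J i g (Hm J i f x) := by
  rw [Hm_comp]; rfl

lemma Hm_id (i : ℕ) : Hm J i (LinearMap.id : M →ₗ[R] M) = LinearMap.id := by
  unfold Hm
  rw [ModuleCat.ofHom_id, CategoryTheory.Functor.map_id]; rfl

/-- Structure maps, linear version. -/
def lι (i t : ℕ) (M : Type) [AddCommGroup M] [Module R M] :
    eM J i t (ModuleCat.of R M) →ₗ[R] HL J i M := (lcι J i t (ModuleCat.of R M)).hom

lemma lι_surj (i : ℕ) (x : HL J i M) : ∃ t y, lι J i t M y = x := lcι_surj J i _ x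

lemma lι_nat (i t : ℕ) (g : M →ₗ[R] N) (y : eM J i t (ModuleCat.of R M)) :
    Hm J i g (lι J i t M y) = lι J i t N ((eMap J i t (ModuleCat.ofHom g)).hom y) :=
  ConcreteCategory.congr_hom (lcι_nat J i t (ModuleCat.ofHom g)) y

lemma lι_tr (i : ℕ) {s t : ℕ} (h : s ≤ t) (y : eM J i s (ModuleCat.of R M)) :
    lι J i t M ((eTr J i h (ModuleCat.of R M)).hom y) = lι J i s M y :=
  ConcreteCategory.congr_hom (lcι_tr J i h (ModuleCat.of R M)) y

lemma lι_eq_zero (i t : ℕ) (y : eM J i t (ModuleCat.of R M)) (hy : lι J i t M y = 0) :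
    ∃ (t' : ℕ) (h : t ≤ t'), (eTr J i h (ModuleCat.of R M)).hom y = 0 :=
  lcι_eq_zero J i t _ y hy

lemma eTr_nat (i : ℕ) {s t : ℕ} (h : s ≤ t) (g : M →ₗ[R] N) (y : eM J i s (ModuleCat.of R M)) :
    (eTr J i h (ModuleCat.of R N)).hom ((eMap J i s (ModuleCat.ofHom g)).hom y) =
    (eMap J i t (ModuleCat.ofHom g)).hom ((eTr J i h (ModuleCat.of R M)).hom y) :=
  ConcreteCategory.congr_hom
    (((Ext R (ModuleCat.{0} R) i).map (qmap J h).op).naturality (ModuleCat.ofHom g)) y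

lemma Hm_add (i : ℕ) (f g : M →ₗ[R] N) : Hm J i (f + g) = Hm J i f + Hm J i g := by
  ext x
  obtain ⟨t, y, rfl⟩ := lι_surj J i x
  rw [LinearMap.add_apply, lι_nat, lι_nat, lι_nat, ← map_add]
  congr 1
  exact ConcreteCategory.congr_hom (ext_map_add (qm J t) i (ModuleCat.ofHom f)
    (ModuleCat.ofHom g)) y

lemma Hm_smul (i : ℕ) (r : R) (f : M →ₗ[R] N) : Hm J i (r • f) = r • Hm J i f := by
  ext x
  obtain ⟨t, y, rfl⟩ := lι_surj J i x
  rw [LinearMap.smul_apply, lι_nat, lι_nat, ← map_smul]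
  congr 1
  exact ConcreteCategory.congr_hom (ext_map_smul (qm J t) i r (ModuleCat.ofHom f)) y

lemma Hm_zero (i : ℕ) : Hm J i (0 : M →ₗ[R] N) = 0 := by
  have := Hm_smul J i 0 (0 : M →ₗ[R] N)
  simpa using this

lemma HL_torsion (i : ℕ) (x : HL J i M) : ∃ t, ∀ r ∈ J ^ t, r • x = 0 := by
  obtain ⟨t, y, rfl⟩ := lι_surj J i x
  refine ⟨t, fun r hr ↦ ?_⟩
  rw [← map_smul, ext_smul_eq_zero (qm J t) i _ r, map_zero]
  ext
  change (Ideal.Quotient.mk (J ^ t)) (r * 1) = 0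
  rw [mul_one, Ideal.Quotient.eq_zero_iff_mem]
  exact hr

lemma HL_injective (i : ℕ) (I : Type) [AddCommGroup I] [Module R I] [Module.Injective R I] :
    Subsingleton (HL J (i + 1) I) := by
  have : Injective (ModuleCat.of R I) := Module.injective_object_of_injective_module R I
  refine ⟨fun a b ↦ ?_⟩
  obtain ⟨t, y, rfl⟩ := lι_surj J _ a
  obtain ⟨t', y', rfl⟩ := lι_surj J _ b
  have h1 := (ext_injective (qm J t) i (ModuleCat.of R I)).elim y 0
  have h2 := (ext_injective (qm J t') i (ModuleCat.of R I)).elim y' 0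
  rw [h1, h2, map_zero, map_zero]

/-- The map `Hom(R/J^t, M) → Ext⁰`. -/
def e0 (t : ℕ) (g : (R ⧸ J ^ t) →ₗ[R] M) : eM J 0 t (ModuleCat.of R M) :=
  (ext0 (qm J t) (ModuleCat.of R M)).hom (ModuleCat.ofHom g)

lemma e0_zero (t : ℕ) : e0 J t (0 : (R ⧸ J ^ t) →ₗ[R] M) = 0 :=
  map_zero (ext0 (qm J t) (ModuleCat.of R M)).hom

lemma e0_natY (t : ℕ) (g : (R ⧸ J ^ t) →ₗ[R] M) (f : M →ₗ[R] N) :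
    (eMap J 0 t (ModuleCat.ofHom f)).hom (e0 J t g) = e0 J t (f ∘ₗ g) :=
  ConcreteCategory.congr_hom (ext0_natY (qm J t) (ModuleCat.ofHom f)) _

lemma e0_natX {s t : ℕ} (h : s ≤ t) (g : (R ⧸ J ^ s) →ₗ[R] M) :
    (eTr J 0 h (ModuleCat.of R M)).hom (e0 J s g) = e0 J t (g ∘ₗ (qmap J h).hom) :=
  ConcreteCategory.congr_hom (ext0_natX (qmap J h) (ModuleCat.of R M)) _

lemma HL0_rep (x : HL J 0 M) : ∃ t, ∃ g : (R ⧸ J ^ t) →ₗ[R] M,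
    lι J 0 t M (e0 J t g) = x := by
  obtain ⟨t, y, rfl⟩ := lι_surj J _ x
  obtain ⟨g, rfl⟩ := ext0_surj _ _ y
  exact ⟨t, (show qm J t ⟶ ModuleCat.of R M from g).hom, rfl⟩

lemma HL0_zero (h : ∀ x : M, (∃ t, ∀ r ∈ J ^ t, r • x = 0) → x = 0) :
    Subsingleton (HL J 0 M) := by
  suffices ∀ a : HL J 0 M, a = 0 from ⟨fun a b ↦ (this a).trans (this b).symm⟩
  intro a
  obtain ⟨t, g, rfl⟩ := HL0_rep J a
  have : g = 0 := by
    ext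
    apply h
    refine ⟨t, fun r hr ↦ ?_⟩
    simp only [LinearMap.coe_comp, Function.comp_apply]
    rw [← map_smul, ← map_smul]
    convert map_zero g
    simpa [Ideal.Quotient.eq_zero_iff_mem] using hr
  rw [this, e0_zero, map_zero]

lemma HL0_surj (f : M →ₗ[R] N) (hf : Function.Surjective f)
    (h : ∀ x : M, ∃ t, ∀ r ∈ J ^ t, r • x = 0) : Function.Surjective (Hm J 0 f) := by
  intro a
  obtain ⟨t, g, rfl⟩ := HL0_rep J a
  obtain ⟨x, hx⟩ := hf (g (Ideal.Quotient.mk _ 1))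
  obtain ⟨s, hs⟩ := h x
  let g' : (R ⧸ J ^ (s + t)) →ₗ[R] M := Submodule.liftQ _ (LinearMap.toSpanSingleton R M x) (by
    intro r hr
    exact hs r (Ideal.pow_le_pow_right (Nat.le_add_right s t) hr))
  refine ⟨lι J 0 (s + t) M (e0 J (s + t) g'), ?_⟩
  have : f ∘ₗ g' = g ∘ₗ (qmap J (Nat.le_add_left t s)).hom := by
    apply Submodule.linearMap_qext
    ext
    change f ((1 : R) • x) = g (Ideal.Quotient.mk _ 1)
    rw [← hx, one_smul]
  rw [lι_nat, ← lι_tr J 0 (Nat.le_add_left t s), e0_natY, e0_natX, this]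

end LCAux
end Part5

section Part6
open CategoryTheory Limits Opposite


namespace LCAux
variable {R : Type} [CommRing R] (J : Ideal R)
variable {M N L : Type} [AddCommGroup M] [Module R M] [AddCommGroup N] [Module R N]
  [AddCommGroup L] [Module R L]

/-- The short complex attached to an exact pair. -/
def scOf (f : M →ₗ[R] N) (g : N →ₗ[R] L) (h : Function.Exact f g) :
    ShortComplex (ModuleCat.{0} R) :=
  ShortComplex.mk (ModuleCat.ofHom f) (ModuleCat.ofHom g) (by
    ext x; exact h.apply_apply_eq_zero x)

lemma scOf_shortExact (f : M →ₗ[R] N) (g : N →ₗ[R] L) (h : Function.Exact f g)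
    (hf : Function.Injective f) (hg : Function.Surjective g) : (scOf f g h).ShortExact := by
  refine ShortComplex.ShortExact.mk' ?_ ?_ ?_
  · rw [ShortComplex.ShortExact.moduleCat_exact_iff_function_exact]
    exact h
  · exact (ModuleCat.mono_iff_injective _).2 hf
  · exact (ModuleCat.epi_iff_surjective _).2 hg

lemma HL_exact₂ (f : M →ₗ[R] N) (g : N →ₗ[R] L) (h : Function.Exact f g)
    (hf : Function.Injective f) (hg : Function.Surjective g) (i : ℕ) :
    Function.Exact (Hm J i f) (Hm J i g) := by
  intro x
  constructor
  · intro hx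
    obtain ⟨t, y, rfl⟩ := lι_surj J i x
    rw [lι_nat] at hx
    obtain ⟨t', h', hy⟩ := lι_eq_zero J i t _ hx
    rw [eTr_nat] at hy
    obtain ⟨z, hz⟩ := (ext_exact₂ (qm J t') _ (scOf_shortExact f g h hf hg) i _).1 hy
    refine ⟨lι J i t' M z, ?_⟩
    exact (lι_nat J i t' f z).trans ((congrArg (lι J i t' N) hz).trans (lι_tr J i h' y))
  · rintro ⟨x, rfl⟩
    rw [← Hm_comp_apply, h.linearMap_comp_eq_zero, Hm_zero]; rfl

/-- Connecting map on Ext, linear version. -/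
def eδ (f : M →ₗ[R] N) (g : N →ₗ[R] L) (h : Function.Exact f g)
    (hf : Function.Injective f) (hg : Function.Surjective g) (i t : ℕ) :
    eM J i t (ModuleCat.of R L) ⟶ eM J (i + 1) t (ModuleCat.of R M) :=
  extδ (qm J t) (scOf f g h) (scOf_shortExact f g h hf hg) i

lemma eδ_tr (f : M →ₗ[R] N) (g : N →ₗ[R] L) (h : Function.Exact f g)
    (hf : Function.Injective f) (hg : Function.Surjective g) (i : ℕ) {s t : ℕ} (hst : s ≤ t) :
    eTr J i hst (ModuleCat.of R L) ≫ eδ J f g h hf hg i t =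
    eδ J f g h hf hg i s ≫ eTr J (i + 1) hst (ModuleCat.of R M) :=
  extδ_nat (qmap J hst) (scOf f g h) (scOf_shortExact f g h hf hg) i

lemma HL_les (f : M →ₗ[R] N) (g : N →ₗ[R] L) (h : Function.Exact f g)
    (hf : Function.Injective f) (hg : Function.Surjective g) (i : ℕ) :
    ∃ δ : HL J i L →ₗ[R] HL J (i + 1) M, Function.Exact (Hm J i g) δ ∧
      Function.Exact δ (Hm J (i + 1) f) := by
  obtain ⟨δ, hδ⟩ := lc_desc J i (ModuleCat.of R L) ((localCohomology J (i + 1)).obj (ModuleCat.of R M))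
    (fun t ↦ eδ J f g h hf hg i t ≫ lcι J (i + 1) t (ModuleCat.of R M)) (by
      intro s t hst
      rw [← Category.assoc, eδ_tr, Category.assoc, lcι_tr])
  have hδ' : ∀ t y, δ.hom (lι J i t L y) = lι J (i + 1) t M ((eδ J f g h hf hg i t).hom y) :=
    fun t y ↦ ConcreteCategory.congr_hom (hδ t) y
  have htr : ∀ {s t : ℕ} (hst : s ≤ t) y, (eδ J f g h hf hg i t).hom
      ((eTr J i hst (ModuleCat.of R L)).hom y) = (eTr J (i + 1) hst (ModuleCat.of R M)).hom
      ((eδ J f g h hf hg i s).hom y) :=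
    fun hst y ↦ ConcreteCategory.congr_hom (eδ_tr J f g h hf hg i hst) y
  have hse := scOf_shortExact f g h hf hg
  refine ⟨δ.hom, ?_, ?_⟩
  · intro x
    constructor
    · intro hx
      obtain ⟨t, y, rfl⟩ := lι_surj J i x
      rw [hδ'] at hx
      obtain ⟨t', h', hy⟩ := lι_eq_zero J _ t _ hx
      rw [← htr] at hy
      obtain ⟨z, hz⟩ := (ext_exact₃ (qm J t') _ hse i _).1 hy
      refine ⟨lι J i t' N z, ?_⟩
      exact (lι_nat J i t' g z).trans ((congrArg (lι J i t' L) hz).trans (lι_tr J i h' y))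
    · rintro ⟨x, rfl⟩
      obtain ⟨t, y, rfl⟩ := lι_surj J i x
      rw [lι_nat, hδ']
      exact (congrArg _ ((ext_exact₃ (qm J t) _ hse i).apply_apply_eq_zero y)).trans (map_zero _)
  · intro x
    constructor
    · intro hx
      obtain ⟨t, y, rfl⟩ := lι_surj J _ x
      rw [lι_nat] at hx
      obtain ⟨t', h', hy⟩ := lι_eq_zero J _ t _ hx
      rw [eTr_nat] at hy
      obtain ⟨z, hz⟩ := (ext_exact₁ (qm J t') _ hse i _).1 hy
      refine ⟨lι J i t' L z, ?_⟩
      exact (hδ' t' z).trans ((congrArg (lι J (i + 1) t' M) hz).trans (lι_tr J (i + 1) h' y))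
    · rintro ⟨x, rfl⟩
      obtain ⟨t, y, rfl⟩ := lι_surj J i x
      rw [hδ', lι_nat]
      exact (congrArg _ ((ext_exact₁ (qm J t) _ hse i).apply_apply_eq_zero y)).trans (map_zero _)

end LCAux
end Part6

section Part7
open CategoryTheory Limits Opposite


namespace LCAux
variable {R : Type} [CommRing R] (J : Ideal R)
variable {M N L : Type} [AddCommGroup M] [Module R M] [AddCommGroup N] [Module R N]
  [AddCommGroup L] [Module R L]

/-- Elementwise torsion. -/
def Tor1 (x : M) : Prop := ∃ t : ℕ, ∀ r ∈ J ^ t, r • x = 0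

/-- Elementwise torsion relative to a submodule. -/
def TorIn (W : Submodule R M) (x : M) : Prop := ∃ t : ℕ, ∀ r ∈ J ^ t, r • x ∈ W

lemma Tor1.map {x : M} (h : Tor1 J x) (f : M →ₗ[R] N) : Tor1 J (f x) := by
  obtain ⟨t, ht⟩ := h
  exact ⟨t, fun r hr ↦ by rw [← map_smul, ht r hr, map_zero]⟩

/-- The `J`-power torsion submodule. -/
def Gam (I : Type) [AddCommGroup I] [Module R I] : Submodule R I where
  carrier := {x | Tor1 J x}
  zero_mem' := ⟨0, fun r _ ↦ smul_zero r⟩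
  add_mem' := by
    rintro a b ⟨s, hs⟩ ⟨t, ht⟩
    refine ⟨s + t, fun r hr ↦ ?_⟩
    rw [smul_add, hs r (Ideal.pow_le_pow_right (by lia) hr),
      ht r (Ideal.pow_le_pow_right (by lia) hr), add_zero]
  smul_mem' := by
    rintro c a ⟨s, hs⟩
    exact ⟨s, fun r hr ↦ by rw [smul_comm, hs r hr, smul_zero]⟩

lemma Gam_tor (I : Type) [AddCommGroup I] [Module R I] (x : Gam J I) : Tor1 J x := by
  obtain ⟨t, ht⟩ := x.2
  exact ⟨t, fun r hr ↦ Subtype.ext (ht r hr)⟩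

/-- A finitely generated torsion module is killed by a power. -/
lemma tor_fg [Module.Finite R M] (f : M →ₗ[R] N) (h : ∀ x : M, Tor1 J (f x)) :
    ∃ t : ℕ, ∀ r ∈ J ^ t, ∀ x, r • f x = 0 := by
  suffices ∀ W : Submodule R M, W.FG → ∃ t : ℕ, ∀ r ∈ J ^ t, ∀ x ∈ W, r • f x = 0 by
    obtain ⟨t, ht⟩ := this ⊤ Module.Finite.fg_top
    exact ⟨t, fun r hr x ↦ ht r hr x trivial⟩
  intro W hW
  induction W, hW using Submodule.fg_induction with
  | singleton x =>
    obtain ⟨t, ht⟩ := h x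
    refine ⟨t, fun r hr y hy ↦ ?_⟩
    obtain ⟨c, rfl⟩ := Submodule.mem_span_singleton.1 hy
    rw [map_smul, smul_comm, ht r hr, smul_zero]
  | sup W1 W2 hW1 hW2 h1 h2 =>
    obtain ⟨s, hs⟩ := h1
    obtain ⟨t, ht⟩ := h2
    refine ⟨s + t, fun r hr y hy ↦ ?_⟩
    obtain ⟨a, ha, b, hb, rfl⟩ := Submodule.mem_sup.1 hy
    rw [map_add, smul_add, hs r (Ideal.pow_le_pow_right (by lia) hr) a ha,
      ht r (Ideal.pow_le_pow_right (by lia) hr) b hb, add_zero]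

lemma Gam_injective [IsNoetherianRing R] (I : Type) [AddCommGroup I] [Module R I]
    [Module.Injective R I] : Module.Injective R (Gam J I) := by
  apply Module.Baer.injective
  intro a g
  obtain ⟨c, hc⟩ := tor_fg J g (fun x ↦ Gam_tor J I _)
  obtain ⟨k0, hk0⟩ := Ideal.exists_pow_inf_eq_pow_smul J (M := R) a
  have hk := hk0 (k0 + c) (by lia)
  let φ : a →ₗ[R] (R ⧸ J ^ (k0 + c)) := (J ^ (k0 + c)).mkQ ∘ₗ a.subtype
  have hφ : LinearMap.ker φ ≤ LinearMap.ker g := by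
    intro x hx
    have hx1 : (x : R) ∈ J ^ (k0 + c) • ⊤ ⊓ a := by
      refine ⟨?_, x.2⟩
      have : φ x = 0 := hx
      have h2 : (x : R) ∈ J ^ (k0 + c) := by
        have := (Submodule.Quotient.mk_eq_zero _).1 this
        exact this
      simpa using h2
    rw [hk, Nat.add_sub_cancel_left] at hx1
    have hx2 : (x : R) ∈ J ^ c • a := Submodule.smul_mono le_rfl inf_le_right hx1
    have hx3 : x ∈ J ^ c • (⊤ : Submodule R a) := by
      have hm : Submodule.map a.subtype (J ^ c • (⊤ : Submodule R a)) = J ^ c • a := by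
        rw [Submodule.map_smul'', Submodule.map_top, Submodule.range_subtype]
      rw [← hm] at hx2
      obtain ⟨y, hy, hyx⟩ := hx2
      rwa [← Subtype.ext hyx]
    rw [LinearMap.mem_ker]
    refine Submodule.smul_induction_on hx3 ?_ ?_
    · intro r hr y _
      rw [map_smul, hc r hr]
    · intro y z hy hz
      rw [map_add, hy, hz, add_zero]
  obtain ⟨h, hh⟩ := Module.Injective.out ((LinearMap.ker φ).liftQ φ le_rfl)
    (LinearMap.ker_eq_bot.1 (Submodule.ker_liftQ_eq_bot _ _ _ le_rfl))
    ((Gam J I).subtype ∘ₗ (LinearMap.ker φ).liftQ g hφ)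
  have hh2 : ∀ x, h x ∈ Gam J I := fun x ↦ ⟨k0 + c, fun r hr ↦ by
    rw [← map_smul]
    convert map_zero h
    obtain ⟨y, rfl⟩ := Submodule.Quotient.mk_surjective _ x
    rw [← Submodule.Quotient.mk_smul, Submodule.Quotient.mk_eq_zero]
    exact Ideal.mul_mem_right _ _ hr⟩
  refine ⟨LinearMap.codRestrict (Gam J I) (h ∘ₗ (J ^ (k0 + c)).mkQ) (fun x ↦ hh2 _), fun x hx ↦ ?_⟩
  apply Subtype.ext
  exact hh (Submodule.Quotient.mk ⟨x, hx⟩)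

lemma exists_inj_hull (N : Type) [AddCommGroup N] [Module R N] : ∃ (I : Type)
    (_ : AddCommGroup I) (_ : Module R I) (f : N →ₗ[R] I), Module.Injective R I ∧
    Function.Injective f := by
  refine ⟨(Injective.under (ModuleCat.of R N) :), inferInstance, inferInstance,
    (Injective.ι (ModuleCat.of R N)).hom, ?_, ?_⟩
  · have : Injective (ModuleCat.of R (Injective.under (ModuleCat.of R N) :)) :=
      inferInstanceAs (Injective (Injective.under (ModuleCat.of R N)))
    exact Module.injective_module_of_injective_object R _
  · exact (ModuleCat.mono_iff_injective _).1 inferInstance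

lemma tor_vanish [IsNoetherianRing R] (j : ℕ) : ∀ (N : Type) [AddCommGroup N] [Module R N]
    (_ : ∀ x : N, Tor1 J x), Subsingleton (HL J (j + 1) N) := by
  induction j with
  | zero =>
    intro N _ _ hN
    obtain ⟨I, _, _, f, hI, hf⟩ := exists_inj_hull (R := R) N
    let f' : N →ₗ[R] Gam J I := f.codRestrict _ (fun x ↦ (hN x).map J f)
    have hf' : Function.Injective f' := fun x y h ↦ hf (congrArg Subtype.val h)
    have hex : Function.Exact f' (LinearMap.range f').mkQ := LinearMap.exact_map_mkQ_range f'
    have hs : Function.Surjective (LinearMap.range f').mkQ := Submodule.mkQ_surjective _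
    have := Gam_injective J I
    have h1 := HL_injective J 0 (Gam J I)
    obtain ⟨δ, h2, h3⟩ := HL_les J _ _ hex hf' hs 0
    have h4 := HL0_surj J _ hs (Gam_tor J I)
    refine ⟨fun a b ↦ ?_⟩
    obtain ⟨a, rfl⟩ := (h3 a).1 (h1.elim _ _)
    obtain ⟨b, rfl⟩ := (h3 b).1 (h1.elim _ _)
    rw [(h2 a).2 (h4 a), (h2 b).2 (h4 b)]
  | succ j ih =>
    intro N _ _ hN
    obtain ⟨I, _, _, f, hI, hf⟩ := exists_inj_hull (R := R) N
    let f' : N →ₗ[R] Gam J I := f.codRestrict _ (fun x ↦ (hN x).map J f)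
    have hf' : Function.Injective f' := fun x y h ↦ hf (congrArg Subtype.val h)
    have hex : Function.Exact f' (LinearMap.range f').mkQ := LinearMap.exact_map_mkQ_range f'
    have hs : Function.Surjective (LinearMap.range f').mkQ := Submodule.mkQ_surjective _
    have := Gam_injective J I
    have h1 := HL_injective J (j + 1) (Gam J I)
    obtain ⟨δ, h2, h3⟩ := HL_les J _ _ hex hf' hs (j + 1)
    have h4 := ih (Gam J I ⧸ LinearMap.range f') (fun x ↦ by
      obtain ⟨y, rfl⟩ := hs x
      exact (Gam_tor J I y).map J _)
    refine ⟨fun a b ↦ ?_⟩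
    obtain ⟨a, rfl⟩ := (h3 a).1 (h1.elim _ _)
    obtain ⟨b, rfl⟩ := (h3 b).1 (h1.elim _ _)
    rw [h4.elim a b]

end LCAux
end Part7

section Part8
open CategoryTheory Limits Opposite


namespace LCAux
variable {R : Type} [CommRing R] (J : Ideal R)
variable {M N L : Type} [AddCommGroup M] [Module R M] [AddCommGroup N] [Module R N]
  [AddCommGroup L] [Module R L]

lemma inj_of_exact_zero {A B C : Type} [AddCommGroup A] [Module R A] [AddCommGroup B] [Module R B]
    [AddCommGroup C] [Module R C]
    {f : A →ₗ[R] B} {g : B →ₗ[R] C} (h : Function.Exact f g) [Subsingleton A] :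
    Function.Injective g := by
  rw [injective_iff_map_eq_zero]
  intro a ha
  obtain ⟨x, rfl⟩ := (h a).1 ha
  rw [Subsingleton.elim x 0, map_zero]

lemma surj_of_exact_zero {A B C : Type} [AddCommGroup A] [Module R A] [AddCommGroup B] [Module R B]
    [AddCommGroup C] [Module R C]
    {f : A →ₗ[R] B} {g : B →ₗ[R] C} (h : Function.Exact f g) [Subsingleton C] :
    Function.Surjective f := fun b ↦ (h b).1 (Subsingleton.elim _ _)

lemma bij_of_surj [IsNoetherianRing R] (f : M →ₗ[R] N) (hf : Function.Surjective f)
    (hk : ∀ x, f x = 0 → Tor1 J x) (i : ℕ) : Function.Bijective (Hm J (i + 1) f) := by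
  have hT : ∀ x : LinearMap.ker f, Tor1 J x := fun x ↦ by
    obtain ⟨t, ht⟩ := hk x x.2
    exact ⟨t, fun r hr ↦ Subtype.ext (ht r hr)⟩
  have hex := LinearMap.exact_subtype_ker_map f
  have hi := Subtype.val_injective (p := (· ∈ LinearMap.ker f))
  have h1 := tor_vanish J i _ hT
  have h2 := tor_vanish J (i + 1) _ hT
  obtain ⟨δ, h3, h4⟩ := HL_les J _ _ hex hi hf (i + 1)
  have h5 := HL_exact₂ J _ _ hex hi hf (i + 1)
  exact ⟨inj_of_exact_zero h5, surj_of_exact_zero h3⟩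

lemma bij_of_inj [IsNoetherianRing R] (f : M →ₗ[R] N) (hf : Function.Injective f)
    (hk : ∀ y, TorIn J (LinearMap.range f) y) (i : ℕ) : Function.Bijective (Hm J (i + 2) f) := by
  have hs : Function.Surjective (LinearMap.range f).mkQ := Submodule.mkQ_surjective _
  have hT : ∀ x : N ⧸ LinearMap.range f, Tor1 J x := fun x ↦ by
    obtain ⟨x, rfl⟩ := hs x
    obtain ⟨t, ht⟩ := hk x
    refine ⟨t, fun r hr ↦ ?_⟩
    rw [← map_smul]
    exact (Submodule.Quotient.mk_eq_zero _).2 (ht r hr)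
  have hex := LinearMap.exact_map_mkQ_range f
  have h1 := tor_vanish J i _ hT
  have h2 := tor_vanish J (i + 1) _ hT
  obtain ⟨δ, h3, h4⟩ := HL_les J _ _ hex hf hs (i + 1)
  have h5 := HL_exact₂ J _ _ hex hf hs (i + 2)
  exact ⟨inj_of_exact_zero h4, surj_of_exact_zero h5⟩

lemma bij_of_sheafIso [IsNoetherianRing R] (f : M →ₗ[R] N)
    (hk : ∀ x, f x = 0 → Tor1 J x)
    (hc : ∀ y, TorIn J (LinearMap.range f) y) (i : ℕ) : Function.Bijective (Hm J (i + 2) f) := by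
  have h1 := bij_of_surj J f.rangeRestrict f.surjective_rangeRestrict
    (fun x hx ↦ hk x (congrArg Subtype.val hx)) (i + 1)
  have h2 := bij_of_inj J (LinearMap.range f).subtype Subtype.val_injective
    (by rw [Submodule.range_subtype]; exact hc) i
  have := h2.comp h1
  rwa [← LinearMap.coe_comp, ← Hm_comp, LinearMap.subtype_comp_codRestrict] at this

/-- The long exact sequence of a complex which is exact up to torsion. -/
lemma les_of_torsion [IsNoetherianRing R] (f : M →ₗ[R] N) (g : N →ₗ[R] L)
    (hgf : ∀ x, g (f x) = 0)
    (hf : ∀ x, f x = 0 → Tor1 J x) (hfg : ∀ y, g y = 0 → TorIn J (LinearMap.range f) y)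
    (hg : ∀ z, TorIn J (LinearMap.range g) z) (i : ℕ) :
    Function.Exact (Hm J (i + 2) f) (Hm J (i + 2) g) ∧
    ∃ δ : HL J (i + 2) L →ₗ[R] HL J (i + 3) M, Function.Exact (Hm J (i + 2) g) δ ∧
      Function.Exact δ (Hm J (i + 3) f) := by
  let f' : M →ₗ[R] LinearMap.ker g := f.codRestrict _ hgf
  have hf' : (LinearMap.ker g).subtype ∘ₗ f' = f := LinearMap.subtype_comp_codRestrict _ _ _
  have hg' : (LinearMap.range g).subtype ∘ₗ g.rangeRestrict = g :=
    LinearMap.subtype_comp_codRestrict _ _ _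
  have b1 : ∀ i, Function.Bijective (Hm J (i + 2) f') := bij_of_sheafIso J f'
    (fun x hx ↦ hf x (congrArg Subtype.val hx)) (fun y ↦ by
      obtain ⟨t, ht⟩ := hfg y y.2
      refine ⟨t, fun r hr ↦ ?_⟩
      obtain ⟨x, hx⟩ := ht r hr
      exact ⟨x, Subtype.ext hx⟩)
  have b2 := bij_of_inj J (LinearMap.range g).subtype Subtype.val_injective
    (by rw [Submodule.range_subtype]; exact hg)
  have hex : Function.Exact (LinearMap.ker g).subtype g.rangeRestrict := fun x ↦ by
    constructor
    · intro hx; exact ⟨⟨x, congrArg Subtype.val hx⟩, rfl⟩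
    · rintro ⟨x, rfl⟩; exact Subtype.ext x.2
  have e2 := HL_exact₂ J _ _ hex Subtype.val_injective g.surjective_rangeRestrict (i + 2)
  obtain ⟨δ, e3, e1⟩ := HL_les J _ _ hex Subtype.val_injective g.surjective_rangeRestrict (i + 2)
  have hfm : ∀ i x, Hm J i f x = Hm J i (LinearMap.ker g).subtype (Hm J i f' x) := fun i x ↦ by
    rw [← Hm_comp_apply, hf']
  have hgm : ∀ i x, Hm J i g x = Hm J i (LinearMap.range g).subtype
      (Hm J i g.rangeRestrict x) := fun i x ↦ by
    rw [← Hm_comp_apply, hg']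
  let E1 := LinearEquiv.ofBijective _ (b1 (i + 1))
  let E2 := LinearEquiv.ofBijective _ (b2 i)
  refine ⟨fun y ↦ ⟨fun hy ↦ ?_, ?_⟩, E1.symm.toLinearMap ∘ₗ δ ∘ₗ E2.symm.toLinearMap,
    fun y ↦ ⟨fun hy ↦ ?_, ?_⟩, fun y ↦ ⟨fun hy ↦ ?_, ?_⟩⟩
  · rw [hgm] at hy
    obtain ⟨x, rfl⟩ := (e2 y).1 ((b2 i).1 (hy.trans (map_zero _).symm))
    obtain ⟨x, rfl⟩ := (b1 i).2 x
    exact ⟨x, hfm _ _⟩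
  · rintro ⟨x, rfl⟩
    rw [hfm, hgm, e2.apply_apply_eq_zero, map_zero]
  · have hy' : δ (E2.symm y) = 0 := by
      apply E1.symm.injective
      rw [map_zero]; exact hy
    obtain ⟨x, hx⟩ := (e3 _).1 hy'
    refine ⟨x, ?_⟩
    rw [hgm, hx]
    exact E2.apply_symm_apply y
  · rintro ⟨x, rfl⟩
    rw [hgm]
    have : E2.symm (Hm J (i + 2) (LinearMap.range g).subtype (Hm J (i + 2) g.rangeRestrict x)) =
      Hm J (i + 2) g.rangeRestrict x := E2.symm_apply_apply _
    simp only [LinearMap.comp_apply, LinearEquiv.coe_coe]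
    rw [this, e3.apply_apply_eq_zero, map_zero]
  · rw [hfm] at hy
    obtain ⟨x, hx⟩ := (e1 _).1 hy
    refine ⟨E2 x, ?_⟩
    simp only [LinearMap.comp_apply, LinearEquiv.coe_coe, LinearEquiv.symm_apply_apply, hx]
    exact E1.symm_apply_apply y
  · rintro ⟨x, rfl⟩
    rw [hfm]
    have : ∀ z, Hm J (i + 3) f' (E1.symm z) = z := E1.apply_symm_apply
    simp only [LinearMap.comp_apply, LinearEquiv.coe_coe]
    rw [this, e1.apply_apply_eq_zero]

/-- Local cohomology of an isomorphic module. -/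
def HLequiv (i : ℕ) (e : M ≃ₗ[R] N) : HL J i M ≃ₗ[R] HL J i N :=
  LinearEquiv.ofLinearMap (Hm J i e.toLinearMap) (Hm J i e.symm.toLinearMap)
    (by rw [← Hm_comp, LinearEquiv.comp_symm, Hm_id])
    (by rw [← Hm_comp, LinearEquiv.symm_comp, Hm_id])

/-- A retract of a module with vanishing cohomology has vanishing cohomology. -/
lemma HL_retract (i : ℕ) (s : M →ₗ[R] N) (p : N →ₗ[R] M) (h : p ∘ₗ s = LinearMap.id)
    [Subsingleton (HL J i N)] : Subsingleton (HL J i M) := by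
  refine ⟨fun a b ↦ ?_⟩
  have : ∀ a, Hm J i p (Hm J i s a) = a := fun a ↦ by rw [← Hm_comp_apply, h, Hm_id]; rfl
  rw [← this a, ← this b, Subsingleton.elim (Hm J i s a) (Hm J i s b)]

lemma Hm_sum {ι : Type*} (s : Finset ι) (i : ℕ) (f : ι → (M →ₗ[R] N)) :
    Hm J i (∑ k ∈ s, f k) = ∑ k ∈ s, Hm J i (f k) := by
  classical
  induction s using Finset.induction_on with
  | empty => simp [Hm_zero]
  | insert a s ha ih => rw [Finset.sum_insert ha, Finset.sum_insert ha, Hm_add, ih]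

/-- Local cohomology commutes with finite products. -/
def HLpi (i : ℕ) (ι : Type) [Fintype ι] [DecidableEq ι] (M : Type) [AddCommGroup M] [Module R M] :
    HL J i (ι → M) ≃ₗ[R] (ι → HL J i M) :=
  LinearEquiv.ofLinearMap
    (LinearMap.pi fun k ↦ Hm J i (LinearMap.proj k))
    (∑ k, Hm J i (LinearMap.single R (fun _ ↦ M) k) ∘ₗ LinearMap.proj k)
    (by
      ext k x l
      simp only [LinearMap.comp_apply, LinearMap.pi_apply, LinearMap.sum_apply, LinearMap.proj_apply,
        map_sum, LinearMap.single_apply, LinearMap.id_apply]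
      rw [Finset.sum_eq_single k]
      · rw [← Hm_comp_apply, Pi.single_eq_same]
        by_cases h : l = k
        · subst h
          rw [LinearMap.proj_comp_single_same, Hm_id]; simp
        · rw [LinearMap.proj_comp_single_ne _ _ _ _ h, Hm_zero]; simp [h]
      · intro b _ hb
        simp [Pi.single_eq_of_ne hb]
      · simp)
    (by
      have : (∑ k, LinearMap.single R (fun _ : ι ↦ M) k ∘ₗ LinearMap.proj k) = LinearMap.id := by
        ext k x l
        simp [Pi.single_apply]
      rw [← Hm_id J i (M := ι → M), ← this, Hm_sum]
      ext x
      simp [Hm_comp])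

lemma HL_proj_vanish (i : ℕ) [Subsingleton (HL J i R)] (M : Type) [AddCommGroup M] [Module R M]
    [Module.Finite R M] [Module.Projective R M] : Subsingleton (HL J i M) := by
  obtain ⟨k, p, hp⟩ := Module.Finite.exists_fin' R M
  obtain ⟨s, hs⟩ := Module.projective_lifting_property p LinearMap.id hp
  have := (HLpi J i (Fin k) R).toEquiv.subsingleton
  exact HL_retract J i s p hs

open TensorProduct in
/-- Local cohomology commutes with tensoring with a finite free module. -/
def HLtensor (i : ℕ) (A M : Type) [AddCommGroup A] [Module R A] [Module.Free R A]
    [Module.Finite R A] [AddCommGroup M] [Module R M] :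
    HL J i (A ⊗[R] M) ≃ₗ[R] A ⊗[R] HL J i M := by
  classical
  let b := Module.Free.chooseBasis R A
  let e : ∀ (M : Type) [AddCommGroup M] [Module R M],
    A ⊗[R] M ≃ₗ[R] (Module.Free.ChooseBasisIndex R A → M) := fun M _ _ ↦
      TensorProduct.comm R A M ≪≫ₗ
        TensorProduct.congr (LinearEquiv.refl R M) b.equivFun ≪≫ₗ
        TensorProduct.piScalarRight R R M _
  exact HLequiv J i (e M) ≪≫ₗ HLpi J i _ M ≪≫ₗ (e (HL J i M)).symm

end LCAux
end Part8

section Part9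
open CategoryTheory Limits Opposite


namespace LCAux

lemma inj_of_torsion {R : Type} [CommRing R] (J : Ideal R) {H : Type} [AddCommGroup H] [Module R H]
    (x : R) (hx : x ∈ J) (hinj : ∀ z : H, x • z = 0 → z = 0) (z : H) (hz : Tor1 J z) : z = 0 := by
  obtain ⟨t, ht⟩ := hz
  have h := ht _ (Ideal.pow_mem_pow hx t)
  clear ht
  induction t with
  | zero => simpa using h
  | succ t ih => exact ih (hinj _ (by rw [← mul_smul, ← pow_succ']; exact h))

variable (K : Type) [Field K] (n : ℕ)

/-- The ideal generated by a set of variables. -/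
def vI (s : Set (Fin (n+1))) : Ideal (MvPolynomial (Fin (n+1)) K) := Ideal.span (MvPolynomial.X '' s)

lemma vI_reg (s : Set (Fin (n+1))) (k : Fin (n+1)) (hk : k ∉ s) (p : MvPolynomial (Fin (n+1)) K)
    (hp : MvPolynomial.X k * p ∈ vI K n s) : p ∈ vI K n s := by
  rw [vI, MvPolynomial.mem_ideal_span_X_image] at hp ⊢
  intro m hm
  obtain ⟨i, hi, h⟩ := hp (Finsupp.single k 1 + m) (by
    rw [MvPolynomial.mem_support_iff] at hm ⊢
    rwa [MvPolynomial.coeff_X_mul])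
  refine ⟨i, hi, ?_⟩
  have : i ≠ k := fun h ↦ hk (h ▸ hi)
  simpa [Finsupp.single_apply, this.symm] using h

lemma HL_vI (J : Ideal (MvPolynomial (Fin (n+1)) K)) (hJ : ∀ k, MvPolynomial.X k ∈ J) (i : ℕ) :
    ∀ s : Finset (Fin (n+1)), i + s.card < n + 1 → Subsingleton (HL J i (MvPolynomial (Fin (n+1)) K ⧸ vI K n s)) := by
  induction i with
  | zero =>
    intro s hs
    obtain ⟨k, hk⟩ : ∃ k, k ∉ s := by
      by_contra! h
      have := Finset.card_eq_of_equiv_fin (s := s) (n := n+1) 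
        ((Equiv.subtypeUnivEquiv h))
      lia
    apply HL0_zero
    intro x hx
    refine inj_of_torsion J (MvPolynomial.X k) (hJ k) ?_ x hx
    intro z hz
    obtain ⟨p, rfl⟩ := Ideal.Quotient.mk_surjective z
    rw [Ideal.Quotient.eq_zero_iff_mem]
    apply vI_reg K n s k (by simpa using hk)
    rw [← Ideal.Quotient.eq_zero_iff_mem]
    exact hz
  | succ i ih =>
    intro s hs
    obtain ⟨k, hk⟩ : ∃ k, k ∉ s := by
      by_contra! h
      have := Finset.card_eq_of_equiv_fin (s := s) (n := n+1) 
        ((Equiv.subtypeUnivEquiv h))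
      lia
    have h1 := ih (insert k s) (by rw [Finset.card_insert_of_notMem hk]; lia)
    let f : (MvPolynomial (Fin (n+1)) K ⧸ vI K n s) →ₗ[MvPolynomial (Fin (n+1)) K] (MvPolynomial (Fin (n+1)) K ⧸ vI K n s) := (MvPolynomial.X k : MvPolynomial (Fin (n+1)) K) • LinearMap.id
    have hle : vI K n s ≤ vI K n (insert k s : Finset _) :=
      Ideal.span_mono (Set.image_mono (by simp))
    let g : (MvPolynomial (Fin (n+1)) K ⧸ vI K n s) →ₗ[MvPolynomial (Fin (n+1)) K] (MvPolynomial (Fin (n+1)) K ⧸ vI K n (insert k s : Finset _)) := Submodule.factor hle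
    have hf : Function.Injective f := by
      rw [injective_iff_map_eq_zero]
      intro z hz
      obtain ⟨p, rfl⟩ := Ideal.Quotient.mk_surjective z
      rw [Ideal.Quotient.eq_zero_iff_mem]
      apply vI_reg K n s k (by simpa using hk)
      rw [← Ideal.Quotient.eq_zero_iff_mem]
      exact hz
    have hg : Function.Surjective g := Submodule.factor_surjective hle
    have hex : Function.Exact f g := by
      intro z
      constructor
      · intro hz
        obtain ⟨p, rfl⟩ := Ideal.Quotient.mk_surjective z
        have hp : p ∈ vI K n (insert k s : Finset _) := by
          rw [← Ideal.Quotient.eq_zero_iff_mem]; exact hz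
        rw [vI, Finset.coe_insert, Set.image_insert_eq, Ideal.span_insert, Submodule.mem_sup] at hp
        obtain ⟨a, ha, b, hb, rfl⟩ := hp
        obtain ⟨c, rfl⟩ := Ideal.mem_span_singleton.1 ha
        refine ⟨Ideal.Quotient.mk _ c, ?_⟩
        change b ∈ vI K n s at hb
        rw [map_add, Ideal.Quotient.eq_zero_iff_mem.2 hb, add_zero]
        rfl
      · rintro ⟨z, rfl⟩
        obtain ⟨p, rfl⟩ := Ideal.Quotient.mk_surjective z
        change Ideal.Quotient.mk (vI K n (insert k s : Finset _)) (MvPolynomial.X k * p) = 0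
        rw [Ideal.Quotient.eq_zero_iff_mem]
        exact Ideal.mul_mem_right _ _ (Ideal.subset_span ⟨k, by simp, rfl⟩)
    obtain ⟨δ, h2, h3⟩ := HL_les J f g hex hf hg i
    have h4 := inj_of_exact_zero h3
    suffices ∀ z : HL J (i + 1) (MvPolynomial (Fin (n+1)) K ⧸ vI K n s), z = 0 from
      ⟨fun a b ↦ (this a).trans (this b).symm⟩
    intro z
    refine inj_of_torsion J (MvPolynomial.X k) (hJ k) ?_ z (HL_torsion J _ z)
    intro w hw
    apply h4
    rw [map_zero, Hm_smul, Hm_id]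
    exact hw

lemma HL_S_vanish (J : Ideal (MvPolynomial (Fin (n+1)) K)) (hJ : ∀ k, MvPolynomial.X k ∈ J) (i : ℕ) (hi : i ≤ n) :
    Subsingleton (HL J i (MvPolynomial (Fin (n+1)) K)) := by
  have := HL_vI K n J hJ i ∅ (by simp; lia)
  have h0 : vI K n (∅ : Finset (Fin (n+1))) = ⊥ := by simp [vI]
  exact (HLequiv J i (Submodule.quotEquivOfEqBot _ h0)).symm.toEquiv.subsingleton

end LCAux
end Part9

section Part10
open CategoryTheory Limits Opposite
open TensorProduct


namespace LCAux
section Wedge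
variable {R : Type} [CommRing R]
variable {M N L : Type} [AddCommGroup M] [Module R M] [AddCommGroup N] [Module R N]
  [AddCommGroup L] [Module R L]

lemma upd0 (a c x : M) : Function.update ![a, c] 0 x = ![x, c] := by
  ext i; fin_cases i <;> rfl
lemma upd1 (a c x : M) : Function.update ![a, c] 1 x = ![a, x] := by
  ext i; fin_cases i <;> rfl

/-- The wedge of two vectors, as a bilinear map. -/
def wd : M →ₗ[R] M →ₗ[R] ⋀[R]^2 M :=
  LinearMap.mk₂ R (fun x y ↦ exteriorPower.ιMulti R 2 ![x, y])
    (fun a b c ↦ by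
      have := (exteriorPower.ιMulti R 2 (M := M)).map_update_add ![a, c] 0 a b
      simpa only [upd0] using this)
    (fun r a c ↦ by
      have := (exteriorPower.ιMulti R 2 (M := M)).map_update_smul ![a, c] 0 r a
      simpa only [upd0] using this)
    (fun a b c ↦ by
      have := (exteriorPower.ιMulti R 2 (M := M)).map_update_add ![a, c] 1 b c
      simpa only [upd1] using this)
    (fun r a c ↦ by
      have := (exteriorPower.ιMulti R 2 (M := M)).map_update_smul ![a, c] 1 r c
      simpa only [upd1] using this)

lemma wd_def (x y : M) : wd (R := R) x y = exteriorPower.ιMulti R 2 ![x, y] := rfl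

lemma wd_self (x : M) : wd (R := R) x x = 0 := by
  rw [wd_def]
  exact (exteriorPower.ιMulti R 2 (M := M)).map_eq_zero_of_eq ![x, x] (i := 0) (j := 1) rfl (by decide)

lemma bil_swap (b : M →ₗ[R] M →ₗ[R] N) (h : ∀ x, b x x = 0) (x y : M) : b x y = - b y x := by
  have := h (x + y)
  simp only [map_add, LinearMap.add_apply, h, zero_add, add_zero] at this
  rw [eq_neg_iff_add_eq_zero, add_comm]; exact this

lemma wd_swap (x y : M) : wd (R := R) x y = - wd y x := bil_swap wd wd_self x y

/-- A bilinear alternating map as an alternating map. -/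
def altOf (b : M →ₗ[R] M →ₗ[R] N) (h : ∀ x, b x x = 0) : M [⋀^Fin 2]→ₗ[R] N where
  toFun v := b (v 0) (v 1)
  map_update_add' {inst} m i x y := by
    have : inst = instDecidableEqFin 2 := Subsingleton.elim _ _
    subst this
    fin_cases i <;> simp
  map_update_smul' {inst} m i c x := by
    have : inst = instDecidableEqFin 2 := Subsingleton.elim _ _
    subst this
    fin_cases i <;> simp
  map_eq_zero_of_eq' v i j hv hij := by
    fin_cases i <;> fin_cases j <;> simp_all

/-- Universal property of the exterior square. -/
def wlift (b : M →ₗ[R] M →ₗ[R] N) (h : ∀ x, b x x = 0) : ⋀[R]^2 M →ₗ[R] N :=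
  exteriorPower.alternatingMapLinearEquiv (altOf b h)

@[simp] lemma wlift_wd (b : M →ₗ[R] M →ₗ[R] N) (h : ∀ x, b x x = 0) (x y : M) :
    wlift b h (wd x y) = b x y := by
  rw [wlift, wd_def, exteriorPower.alternatingMapLinearEquiv_apply_ιMulti]; rfl

lemma wext {f g : ⋀[R]^2 M →ₗ[R] N} (h : ∀ x y, f (wd x y) = g (wd x y)) : f = g := by
  apply exteriorPower.linearMap_ext
  ext v
  have := h (v 0) (v 1)
  rw [wd_def] at this
  have e : v = ![v 0, v 1] := by ext i; fin_cases i <;> rfl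
  rw [e]; exact this

lemma wext' {f g : ⋀[R]^2 M →ₗ[R] N} (h : ∀ x y, f (wd x y) = g (wd x y)) (z) : f z = g z := by
  rw [wext h]

/-- Functoriality of the exterior square. -/
abbrev wmap (f : M →ₗ[R] N) : ⋀[R]^2 M →ₗ[R] ⋀[R]^2 N := exteriorPower.map 2 f

@[simp] lemma wmap_wd (f : M →ₗ[R] N) (x y : M) : wmap f (wd x y) = wd (f x) (f y) := by
  rw [wd_def, exteriorPower.map_apply_ιMulti, wd_def]
  congr 1; ext i; fin_cases i <;> rfl

lemma wmap_surj {f : M →ₗ[R] N} (h : Function.Surjective f) : Function.Surjective (wmap f) :=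
  exteriorPower.map_surjective h

lemma wmap_smul (f : M →ₗ[R] M) (r : R) (h : ∀ x, f x = r • x) (z) : wmap f z = (r * r) • z := by
  refine wext' (f := wmap f) (g := (r * r) • LinearMap.id) (fun x y ↦ ?_) z
  simp [h, mul_smul]

/-- `a ⊗ g ↦ α a ∧ g`. -/
def aw (α : L →ₗ[R] M) : L ⊗[R] M →ₗ[R] ⋀[R]^2 M := TensorProduct.lift (wd ∘ₗ α)
@[simp] lemma aw_tmul (α : L →ₗ[R] M) (a : L) (x : M) : aw α (a ⊗ₜ x) = wd (α a) x := by
  simp [aw]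

/-- Right exactness of the exterior square. -/
lemma wedge_right_exact (α : L →ₗ[R] M) (π : M →ₗ[R] N) (hπ : Function.Surjective π)
    (hex : Function.Exact α π) : Function.Exact (aw α) (wmap π) := by
  have hc : ∀ z, wmap π (aw α z) = 0 := by
    intro z
    induction z with
    | zero => simp
    | add x y hx hy => rw [map_add, map_add, hx, hy, add_zero]
    | tmul a x => simp [hex.apply_apply_eq_zero]
  intro z
  refine ⟨fun hz ↦ ?_, ?_⟩
  swap
  · rintro ⟨w, rfl⟩; exact hc w
  let Q := (⋀[R]^2 M) ⧸ LinearMap.range (aw α)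
  let q : ⋀[R]^2 M →ₗ[R] Q := Submodule.mkQ _
  have hq : ∀ a x, q (wd (α a) x) = 0 := fun a x ↦
    (Submodule.Quotient.mk_eq_zero _).2 ⟨a ⊗ₜ x, by simp⟩
  have hq1 : ∀ x x' y, π x = π x' → q (wd x y) = q (wd x' y) := by
    intro x x' y h
    obtain ⟨a, ha⟩ := (hex (x - x')).1 (by rw [map_sub, h, sub_self])
    have := hq a y
    rw [ha, map_sub, LinearMap.sub_apply, map_sub, sub_eq_zero] at this
    exact this
  have hq2 : ∀ x x' y, π x = π x' → q (wd y x) = q (wd y x') := by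
    intro x x' y h
    rw [wd_swap, wd_swap y, map_neg, map_neg, hq1 _ _ _ h]
  let s : N → M := Function.surjInv hπ
  have hs : ∀ x, π (s x) = x := Function.surjInv_eq hπ
  let b : N →ₗ[R] N →ₗ[R] Q := LinearMap.mk₂ R (fun x y ↦ q (wd (s x) (s y)))
    (fun x x' y ↦ by
      rw [hq1 (s (x + x')) (s x + s x') (s y) (by simp [hs])]; simp)
    (fun r x y ↦ by
      rw [hq1 (s (r • x)) (r • s x) (s y) (by simp [hs])]; simp)
    (fun y x x' ↦ by
      rw [hq2 (s (x + x')) (s x + s x') (s y) (by simp [hs])]; simp)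
    (fun r y x ↦ by
      rw [hq2 (s (r • x)) (r • s x) (s y) (by simp [hs])]; simp)
  have hb : ∀ x y, b x y = q (wd (s x) (s y)) := fun _ _ ↦ rfl
  let F := wlift b (fun x ↦ by rw [hb, wd_self, map_zero])
  have hF : ∀ z, F (wmap π z) = q z := by
    intro z
    refine wext' (f := F ∘ₗ wmap π) (g := q) (fun x y ↦ ?_) z
    simp only [LinearMap.comp_apply, wmap_wd, F, wlift_wd, hb]
    rw [hq1 _ x _ (hs _), hq2 _ y _ (hs _)]
  have : q z = 0 := by rw [← hF, hz, map_zero]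
  exact (Submodule.Quotient.mk_eq_zero _).1 this

end Wedge
end LCAux
end Part10

section Part11
open CategoryTheory Limits Opposite
open TensorProduct


namespace LCAux
section Local
variable {R : Type} [CommRing R] 
variable {M N L : Type} [AddCommGroup M] [Module R M] [AddCommGroup N] [Module R N]
  [AddCommGroup L] [Module R L]

lemma pow_le_of_local [IsNoetherianRing R] (J I : Ideal R)
    (h : ∀ p : Ideal R, p.IsPrime → p ≠ J → ∃ f, f ∉ p ∧ f ∈ I) : ∃ t, J ^ t ≤ I := by
  apply Ideal.exists_pow_le_of_le_radical_of_fg_radical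
  · rw [Ideal.radical_eq_sInf]
    refine le_sInf ?_
    rintro p ⟨hp, hp'⟩
    by_cases e : p = J
    · rw [e]
    · obtain ⟨f, hf, hf'⟩ := h p hp' e
      exact absurd (hp hf') hf
  · exact IsNoetherian.noetherian _

lemma torIn_of_local [IsNoetherianRing R] (J : Ideal R) (W : Submodule R M) (x : M)
    (h : ∀ p : Ideal R, p.IsPrime → p ≠ J → ∃ f, f ∉ p ∧ f • x ∈ W) : TorIn J W x := by
  obtain ⟨t, ht⟩ := pow_le_of_local J (W.comap (LinearMap.toSpanSingleton R M x)) 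
    (fun p hp hpJ ↦ by simpa using h p hp hpJ)
  exact ⟨t, fun r hr ↦ by simpa using ht hr⟩

lemma tor1_of_local [IsNoetherianRing R] (J : Ideal R) (x : M)
    (h : ∀ p : Ideal R, p.IsPrime → p ≠ J → ∃ f, f ∉ p ∧ f • x = 0) : Tor1 J x := by
  obtain ⟨t, ht⟩ := torIn_of_local J (⊥ : Submodule R M) x (by simpa using h)
  exact ⟨t, fun r hr ↦ by simpa using ht r hr⟩

lemma quasi_inv_of_loc (S : Submonoid R) {M' N' : Type} [AddCommGroup M'] [Module R M']
    [AddCommGroup N'] [Module R N'] (g : M →ₗ[R] M') (f : N →ₗ[R] N')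
    [IsLocalizedModule S g] [IsLocalizedModule S f] [Module.FinitePresentation R M]
    [Module.FinitePresentation R N] (e : M' ≃ₗ[R] N') :
    ∃ (s : R) (a : M →ₗ[R] N) (b : N →ₗ[R] M), s ∈ S ∧ (∀ x, a (b x) = s • x) ∧
      (∀ y, b (a y) = s • y) := by
  obtain ⟨a, s, ha⟩ := Module.FinitePresentation.exists_lift_of_isLocalizedModule S f (e.toLinearMap ∘ₗ g)
  obtain ⟨b, s', hb⟩ := Module.FinitePresentation.exists_lift_of_isLocalizedModule S g (e.symm.toLinearMap ∘ₗ f)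
  have ha' : ∀ x, f (a x) = (s : R) • e (g x) := fun x ↦ LinearMap.congr_fun ha x
  have hb' : ∀ x, g (b x) = (s' : R) • e.symm (f x) := fun x ↦ LinearMap.congr_fun hb x
  obtain ⟨u, hu⟩ := Module.Finite.exists_smul_of_comp_eq_of_isLocalizedModule S f (a ∘ₗ b)
    (((s : R) * s') • LinearMap.id) (by
      ext x; simp [ha', hb', mul_smul])
  obtain ⟨v, hv⟩ := Module.Finite.exists_smul_of_comp_eq_of_isLocalizedModule S g (b ∘ₗ a)
    (((s : R) * s') • LinearMap.id) (by
      ext x; simp [ha', hb', mul_smul]; rw [smul_comm])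
  have hu' : ∀ x, (u : R) • a (b x) = (u : R) • ((s : R) * s') • x := fun x ↦ LinearMap.congr_fun hu x
  have hv' : ∀ x, (v : R) • b (a x) = (v : R) • ((s : R) * s') • x := fun x ↦ LinearMap.congr_fun hv x
  refine ⟨u * v * (s * s'), ((u : R) * v) • a, b, (u * v * (s * s')).2, fun x ↦ ?_, fun x ↦ ?_⟩
  · rw [LinearMap.smul_apply, mul_comm (u : R), mul_smul, hu', ← mul_smul, ← mul_smul]
  · rw [LinearMap.smul_apply, map_smul, mul_smul, hv', ← mul_smul, ← mul_smul]

lemma quasi_free [IsNoetherianRing R] [Module.Finite R M] (p : Ideal R) [p.IsPrime] (k : ℕ)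
    (b : Module.Basis (Fin k) (Localization.AtPrime p) (LocalizedModule p.primeCompl M)) :
    ∃ (s : R) (a : M →ₗ[R] (Fin k → R)) (b : (Fin k → R) →ₗ[R] M), s ∉ p ∧ (∀ x, a (b x) = s • x) ∧
      (∀ y, b (a y) = s • y) := by
  have := Module.finitePresentation_of_finite R M
  have := quasi_inv_of_loc p.primeCompl (LocalizedModule.mkLinearMap p.primeCompl M)
    (LinearMap.pi fun i : Fin k ↦ (Algebra.linearMap R (Localization.AtPrime p)) ∘ₗ LinearMap.proj i)
    (b.equivFun.restrictScalars R)
  exact this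

lemma quasi_free' [IsNoetherianRing R] [Module.Finite R M] (p : Ideal R) [p.IsPrime] 
    (h : Module.Free (Localization.AtPrime p) (LocalizedModule p.primeCompl M)) :
    ∃ (k : ℕ) (s : R) (a : M →ₗ[R] (Fin k → R)) (b : (Fin k → R) →ₗ[R] M), s ∉ p ∧
      (∀ x, a (b x) = s • x) ∧ (∀ y, b (a y) = s • y) :=
  ⟨_, quasi_free p _ (Module.finBasis _ _)⟩

lemma quasi_free2 [IsNoetherianRing R] [Module.Finite R M] (p : Ideal R) [p.IsPrime] 
    (h : Module.Free (Localization.AtPrime p) (LocalizedModule p.primeCompl M))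
    (h2 : Module.rank (Localization.AtPrime p) (LocalizedModule p.primeCompl M) = 2) :
    ∃ (s : R) (a : M →ₗ[R] (Fin 2 → R)) (b : (Fin 2 → R) →ₗ[R] M), s ∉ p ∧
      (∀ x, a (b x) = s • x) ∧ (∀ y, b (a y) = s • y) := by
  have hf : Module.finrank (Localization.AtPrime p) (LocalizedModule p.primeCompl M) = 2 := by
    rw [Module.finrank, h2]; simp
  exact quasi_free p 2 (Module.finBasisOfFinrankEq _ _ hf)

/-- Local retraction of a subbundle. -/
lemma quasi_retract (α : N →ₗ[R] M) (hα : Function.Injective α) [IsNoetherianRing R] [Module.Finite R M]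
    (p : Ideal R) [p.IsPrime] 
    (h : Module.Free (Localization.AtPrime p) (LocalizedModule p.primeCompl (M ⧸ LinearMap.range α))) :
    ∃ (s : R) (τ : M →ₗ[R] N), s ∉ p ∧ ∀ x, τ (α x) = s • x := by
  obtain ⟨k, s, a, b, hs, hab, hba⟩ := quasi_free' p h
  obtain ⟨c, hc⟩ := Module.projective_lifting_property (LinearMap.range α).mkQ b (Submodule.mkQ_surjective _)
  have hc' : ∀ x, (LinearMap.range α).mkQ (c x) = b x := fun x ↦ LinearMap.congr_fun hc x
  let F : M →ₗ[R] M := s • LinearMap.id - c ∘ₗ a ∘ₗ (LinearMap.range α).mkQ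
  have hF : ∀ x, F x ∈ LinearMap.range α := by
    intro x
    rw [← Submodule.Quotient.mk_eq_zero, ← Submodule.mkQ_apply]
    simp only [F, LinearMap.sub_apply, LinearMap.comp_apply, map_sub, hc', hba]
    simp
  let e := LinearEquiv.ofInjective α hα
  refine ⟨s, e.symm.toLinearMap ∘ₗ F.codRestrict _ hF, hs, fun x ↦ ?_⟩
  apply e.injective
  simp only [LinearMap.comp_apply, LinearEquiv.coe_coe, LinearEquiv.apply_symm_apply]
  ext
  have : (LinearMap.range α).mkQ (α x) = 0 := by simp
  simp [F, e, this, -Submodule.mkQ_apply]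

lemma exists_not_mem (J : Ideal R) (hJ : J.IsMaximal) (p : Ideal R) [p.IsPrime] (h : p ≠ J) :
    ∃ f ∈ J, f ∉ p := by
  by_contra! hc
  exact h (hJ.eq_of_le (Ideal.IsPrime.ne_top ‹_›) hc).symm

/-- Local section of a map onto a free module that is surjective away from `J`. -/
lemma quasi_section (J : Ideal R) (hJ : J.IsMaximal) (p : Ideal R) [p.IsPrime] (hp : p ≠ J)
    (β : M →ₗ[R] N) [Module.Free R N] [Module.Finite R N]
    (c : ℕ) (hc : ∀ r ∈ J ^ c, ∀ y, r • y ∈ LinearMap.range β) :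
    ∃ (s : R) (σ : N →ₗ[R] M), s ∉ p ∧ ∀ x, β (σ x) = s • x := by
  obtain ⟨f, hf, hfp⟩ := exists_not_mem J hJ p hp
  let F : N →ₗ[R] LinearMap.range β := (f ^ c • LinearMap.id).codRestrict _ 
    (fun y ↦ hc _ (Ideal.pow_mem_pow hf c) y)
  obtain ⟨σ, hσ⟩ := Module.projective_lifting_property β.rangeRestrict F (LinearMap.surjective_rangeRestrict _)
  refine ⟨f ^ c, σ, fun h ↦ hfp (Ideal.IsPrime.mem_of_pow_mem ‹_› _ h), fun x ↦ ?_⟩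
  exact congrArg Subtype.val (LinearMap.congr_fun hσ x)

end Local
end LCAux
end Part11

section Part12
open CategoryTheory Limits Opposite
open TensorProduct


namespace LCAux
section Seqs
variable {R : Type} [CommRing R] 
variable {M N L : Type} [AddCommGroup M] [Module R M] [AddCommGroup N] [Module R N]
  [AddCommGroup L] [Module R L]

/-- A short sequence which is exact up to `J`-torsion. -/
structure TSeq (J : Ideal R) (f : M →ₗ[R] N) (g : N →ₗ[R] L) : Prop where
  hgf : ∀ x, g (f x) = 0
  hf : ∀ x, f x = 0 → Tor1 J x
  hfg : ∀ y, g y = 0 → TorIn J (LinearMap.range f) y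
  hg : ∀ z, TorIn J (LinearMap.range g) z

lemma TSeq.bij_left [IsNoetherianRing R] {J : Ideal R} {f : M →ₗ[R] N} {g : N →ₗ[R] L} (h : TSeq J f g) (i : ℕ)
    [h1 : Subsingleton (HL J (i+2) L)] [h2 : Subsingleton (HL J (i+3) L)] :
    Function.Bijective (Hm J (i+3) f) := by
  obtain ⟨-, δ, -, h5⟩ := les_of_torsion J f g h.hgf h.hf h.hfg h.hg i
  obtain ⟨h6, -⟩ := les_of_torsion J f g h.hgf h.hf h.hfg h.hg (i+1)
  exact ⟨inj_of_exact_zero h5, surj_of_exact_zero h6⟩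

lemma TSeq.bij_right [IsNoetherianRing R] {J : Ideal R} {f : M →ₗ[R] N} {g : N →ₗ[R] L} (h : TSeq J f g) (i : ℕ)
    [h1 : Subsingleton (HL J (i+2) M)] [h2 : Subsingleton (HL J (i+3) M)] :
    Function.Bijective (Hm J (i+2) g) := by
  obtain ⟨h3, δ, h4, h5⟩ := les_of_torsion J f g h.hgf h.hf h.hfg h.hg i
  exact ⟨inj_of_exact_zero h3, surj_of_exact_zero h4⟩

/-- `p ∧ q ↦ β p ⊗ q - β q ⊗ p`. -/
def dw (β : M →ₗ[R] N) : ⋀[R]^2 M →ₗ[R] N ⊗[R] M :=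
  wlift ((TensorProduct.mk R N M) ∘ₗ β - ((TensorProduct.mk R N M) ∘ₗ β).flip) (fun x ↦ by simp)

@[simp] lemma dw_wd (β : M →ₗ[R] N) (x y : M) : dw β (wd x y) = β x ⊗ₜ y - β y ⊗ₜ x := by
  simp [dw]

/-- Antisymmetrization. -/
abbrev asym (R N : Type) [CommRing R] [AddCommGroup N] [Module R N] : ⋀[R]^2 N →ₗ[R] N ⊗[R] N := 
  dw LinearMap.id

lemma lT_dw (β : M →ₗ[R] N) (z) : β.lTensor N (dw β z) = asym R N (wmap β z) := by
  refine wext' (f := β.lTensor N ∘ₗ dw β) (g := asym R N ∘ₗ wmap β) (fun x y ↦ ?_) z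
  simp

lemma asym_retract [Module.Free R N] [Module.Finite R N] :
    ∃ ρ : N ⊗[R] N →ₗ[R] ⋀[R]^2 N, ∀ z, ρ (asym R N z) = z := by
  classical
  let I := Module.Free.ChooseBasisIndex R N
  let b : Module.Basis I R N := Module.Free.chooseBasis R N
  let : LinearOrder I := linearOrderOfSTO (WellOrderingRel (α := I))
  let ρ : N ⊗[R] N →ₗ[R] ⋀[R]^2 N := TensorProduct.lift
    (b.constr R (fun i ↦ b.constr R (fun j ↦ if i < j then wd (b i) (b j) else 0)))
  have hρ : ∀ i j, ρ (b i ⊗ₜ b j) = if i < j then wd (b i) (b j) else 0 := by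
    intro i j
    simp only [ρ]
    rw [TensorProduct.lift.tmul, Module.Basis.constr_basis, Module.Basis.constr_basis]
  refine ⟨ρ, fun z ↦ wext' (f := ρ ∘ₗ asym R N) (g := LinearMap.id) (fun x y ↦ ?_) z⟩
  have : wd.compr₂ (ρ ∘ₗ asym R N) = wd := by
    refine b.ext fun i ↦ b.ext fun j ↦ ?_
    simp only [LinearMap.compr₂_apply, LinearMap.comp_apply, dw_wd, map_sub, hρ, LinearMap.id_apply]
    rcases lt_trichotomy i j with h | h | h
    · simp [h, h.not_gt]
    · subst h; simp [wd_self]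
    · simp [h, h.not_gt]; exact (wd_swap _ _).symm
  exact LinearMap.congr_fun₂ this x y


lemma retract_proj [Module.Projective R M] (i : N →ₗ[R] M) (s : M →ₗ[R] N) (h : ∀ x, s (i x) = x) :
    Module.Projective R N := Module.Projective.of_split i s (LinearMap.ext h)

lemma range_proj [Module.Projective R M] (e : M →ₗ[R] M) (h : ∀ x, e (e x) = e x) :
    Module.Projective R (LinearMap.range e) := by
  refine retract_proj (LinearMap.range e).subtype e.rangeRestrict ?_
  rintro ⟨_, y, rfl⟩
  ext; simp [h]

lemma ker_proj [Module.Projective R M] [Module.Projective R N] (q : M →ₗ[R] N) (h : Function.Surjective q) :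
    Module.Projective R (LinearMap.ker q) := by
  obtain ⟨s, hs⟩ := Module.projective_lifting_property q LinearMap.id h
  have hs' : ∀ x, q (s x) = x := fun x ↦ LinearMap.congr_fun hs x
  refine retract_proj (LinearMap.ker q).subtype
    ((LinearMap.id - s ∘ₗ q).codRestrict _ (fun x ↦ by simp [hs'])) ?_
  rintro ⟨x, hx⟩
  rw [LinearMap.mem_ker] at hx
  ext; simp [hx]

/-- Local sections away from `J`. -/
def LocSec (J : Ideal R) (β : M →ₗ[R] N) : Prop :=
  ∀ p : Ideal R, p.IsPrime → p ≠ J → ∃ (s : R) (σ : N →ₗ[R] M), s ∉ p ∧ ∀ x, β (σ x) = s • x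

/-- Local retractions away from `J`. -/
def LocRet (J : Ideal R) (α : N →ₗ[R] M) : Prop :=
  ∀ p : Ideal R, p.IsPrime → p ≠ J → ∃ (s : R) (τ : M →ₗ[R] N), s ∉ p ∧ ∀ x, τ (α x) = s • x

lemma pmul {p : Ideal R} (hp : p.IsPrime) {a b : R} (ha : a ∉ p) (hb : b ∉ p) : a * b ∉ p :=
  fun h ↦ (hp.mem_or_mem h).elim ha hb

lemma swap_asym (w) : TensorProduct.comm R N N (asym R N w) = - asym R N w := by
  refine wext' (f := (TensorProduct.comm R N N).toLinearMap ∘ₗ asym R N) (g := - asym R N) (fun x y ↦ ?_) w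
  simp

section
variable (β : M →ₗ[R] N) (s : R) (σ : N →ₗ[R] M)

/-- The projection to the kernel attached to a quasi-section. -/
def kpr (hσ : ∀ x, β (σ x) = s • x) : M →ₗ[R] LinearMap.ker β :=
  (s • LinearMap.id - σ ∘ₗ β).codRestrict _ (fun x ↦ by simp [hσ])

lemma kpr_coe (hσ : ∀ x, β (σ x) = s • x) (x : M) : (kpr β s σ hσ x : M) = s • x - σ (β x) := rfl

lemma kpr_ker (hσ : ∀ x, β (σ x) = s • x) (x : LinearMap.ker β) : kpr β s σ hσ x = s • x := by
  ext; rw [kpr_coe, LinearMap.mem_ker.1 x.2]; simp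

lemma d_id1 (hσ : ∀ x, β (σ x) = s • x) (y : ⋀[R]^2 M) : (s * s) • y = wmap (LinearMap.ker β).subtype (wmap (kpr β s σ hσ) y)
    + s • aw σ (dw β y) - wmap σ (wmap β y) := by
  refine wext' (f := (s * s) • LinearMap.id) (g := wmap (LinearMap.ker β).subtype ∘ₗ wmap (kpr β s σ hσ) 
    + s • aw σ ∘ₗ dw β - wmap σ ∘ₗ wmap β) (fun x y ↦ ?_) y
  simp only [LinearMap.smul_apply, LinearMap.id_apply, LinearMap.sub_apply, LinearMap.add_apply,
    LinearMap.comp_apply, wmap_wd, dw_wd, map_sub, aw_tmul, Submodule.subtype_apply, kpr_coe, map_smul]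
  rw [wd_swap (σ (β y)) x, mul_smul]
  simp only [smul_sub, smul_neg]
  abel

lemma d_id2 (hσ : ∀ x, β (σ x) = s • x) (y : N ⊗[R] M) : s • y = dw β (aw σ y) + 
    σ.lTensor N (TensorProduct.comm R N N (β.lTensor N y)) := by
  induction y with
  | zero => simp
  | add x y hx hy => simp only [smul_add, map_add]; rw [hx, hy]; abel
  | tmul b p => simp [hσ, smul_tmul']

lemma d_id3 (hσ : ∀ x, β (σ x) = s • x) (w : ⋀[R]^2 N) : dw β (wmap σ w) = s • σ.lTensor N (asym R N w) := by
  refine wext' (f := dw β ∘ₗ wmap σ) (g := s • σ.lTensor N ∘ₗ asym R N) (fun x y ↦ ?_) w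
  simp [hσ, smul_tmul', smul_sub]

end

end Seqs
end LCAux
end Part12

section Part13
open CategoryTheory Limits Opposite
open TensorProduct


namespace LCAux
section Seqs
variable {R : Type} [CommRing R] [IsNoetherianRing R] (J : Ideal R)
variable {P B A G : Type} [AddCommGroup P] [Module R P] [AddCommGroup B] [Module R B]
  [AddCommGroup A] [Module R A] [AddCommGroup G] [Module R G]

lemma seq_ker (β : P →ₗ[R] B) (h : LocSec J β) : TSeq J (LinearMap.ker β).subtype β where
  hgf x := x.2
  hf x hx := ⟨0, fun r _ ↦ by
    have : x = 0 := Subtype.ext hx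
    simp [this]⟩
  hfg y hy := ⟨0, fun r _ ↦ ⟨r • ⟨y, hy⟩, rfl⟩⟩
  hg z := torIn_of_local _ _ _ fun p hp hpJ ↦ by
    obtain ⟨s, σ, hs, hσ⟩ := h p hp hpJ
    exact ⟨s, hs, σ z, hσ z⟩

/-- Sequence `Λ²G → Λ²P → B ⊗ P → S²B`. -/
lemma seq_B (β : P →ₗ[R] B) (h : LocSec J β) [Module.Free R B] [Module.Finite R B] 
    [Module.Finite R P] :
    ∃ (S2 : Type) (_ : AddCommGroup S2) (_ : Module R S2) (_ : Module.Finite R S2)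
      (_ : Module.Projective R S2) (q : B ⊗[R] P →ₗ[R] S2)
      (g : ⋀[R]^2 P →ₗ[R] LinearMap.ker q),
      TSeq J (LinearMap.ker q).subtype q ∧ TSeq J (wmap (LinearMap.ker β).subtype) g := by
  obtain ⟨ρ, hρ⟩ := asym_retract (R := R) (N := B)
  let e : B ⊗[R] B →ₗ[R] B ⊗[R] B := LinearMap.id - asym R B ∘ₗ ρ
  have he : ∀ x, e x = x - asym R B (ρ x) := fun x ↦ rfl
  have hea : ∀ w, e (asym R B w) = 0 := fun w ↦ by rw [he, hρ, sub_self]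
  have hee : ∀ x, e (e x) = e x := fun x ↦ by
    conv_lhs => rw [he x, map_sub, hea, sub_zero]
  let q : B ⊗[R] P →ₗ[R] LinearMap.range e := e.rangeRestrict ∘ₗ β.lTensor B
  have hq : ∀ y, (q y : B ⊗[R] B) = e (β.lTensor B y) := fun y ↦ rfl
  have hqd : ∀ x, q (dw β x) = 0 := fun x ↦ by
    ext; rw [hq, lT_dw, hea]; rfl
  let g : ⋀[R]^2 P →ₗ[R] LinearMap.ker q := (dw β).codRestrict _ hqd
  have hg : ∀ x, (g x : B ⊗[R] P) = dw β x := fun x ↦ rfl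
  refine ⟨LinearMap.range e, inferInstance, inferInstance, inferInstance, range_proj e hee, q, g, ?_, ?_⟩
  · apply seq_ker
    intro p hp hpJ
    obtain ⟨s, σ, hs, hσ⟩ := h p hp hpJ
    refine ⟨s, σ.lTensor B ∘ₗ (LinearMap.range e).subtype, hs, ?_⟩
    rintro ⟨_, y, rfl⟩
    ext
    rw [hq]
    have : ∀ z, β.lTensor B (σ.lTensor B z) = s • z := by
      intro z
      induction z with
      | zero => simp
      | add x y hx hy => simp only [smul_add, map_add, hx, hy]
      | tmul x y => simp [hσ]
    simp only [LinearMap.comp_apply, Submodule.subtype_apply, this, map_smul, hee]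
    rfl
  · refine ⟨fun x ↦ ?_, fun x hx ↦ ?_, fun y hy ↦ ?_, fun z ↦ ?_⟩
    · ext
      rw [hg]
      refine wext' (f := dw β ∘ₗ wmap (LinearMap.ker β).subtype) (g := 0) (fun x y ↦ ?_) x
      simp
    · refine tor1_of_local _ _ fun p hp hpJ ↦ ?_
      obtain ⟨s, σ, hs, hσ⟩ := h p hp hpJ
      refine ⟨s * s, pmul hp hs hs, ?_⟩
      rw [← wmap_smul (kpr β s σ hσ ∘ₗ (LinearMap.ker β).subtype) s (fun x ↦ kpr_ker β s σ hσ x) x,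
        wmap, exteriorPower.map_comp, LinearMap.comp_apply]
      rw [hx, map_zero]
    · refine torIn_of_local _ _ _ fun p hp hpJ ↦ ?_
      obtain ⟨s, σ, hs, hσ⟩ := h p hp hpJ
      refine ⟨s * s, pmul hp hs hs, ?_⟩
      have hd : dw β y = 0 := by rw [← hg, hy]; rfl
      have hw : wmap β y = 0 := by
        rw [← hρ (wmap β y), ← lT_dw, hd, map_zero, map_zero]
      rw [d_id1 β s σ hσ, hd, hw]
      refine ⟨wmap (kpr β s σ hσ) y, ?_⟩
      simp
    · refine torIn_of_local _ _ _ fun p hp hpJ ↦ ?_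
      obtain ⟨s, σ, hs, hσ⟩ := h p hp hpJ
      refine ⟨s * s, pmul hp hs hs, ?_⟩
      obtain ⟨y, hy⟩ := z
      have hy1 : β.lTensor B y = asym R B (ρ (β.lTensor B y)) := by
        have h1 : e (β.lTensor B y) = 0 := by rw [← hq, LinearMap.mem_ker.1 hy]; rfl
        rw [he, sub_eq_zero] at h1
        exact h1
      generalize ρ (β.lTensor B y) = w at hy1
      refine ⟨s • aw σ y - wmap σ w, ?_⟩
      ext
      rw [hg, map_sub, d_id3 β s σ hσ, Submodule.coe_smul, mul_smul]
      have h2 := d_id2 β s σ hσ y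
      rw [hy1, swap_asym] at h2
      change _ = s • s • y
      rw [h2]
      simp [smul_add, sub_eq_add_neg]

/-- Sequence `S²A → A ⊗ G → Λ²G`. -/
lemma seq_A (α : A →ₗ[R] G) (hα : Function.Injective α) (h : LocRet J α) [Module.Free R A] [Module.Finite R A] :
    ∃ (S2 : Type) (_ : AddCommGroup S2) (_ : Module R S2) (_ : Module.Finite R S2)
      (_ : Module.Projective R S2) (q : S2 →ₗ[R] A ⊗[R] G),
      TSeq J (L := LinearMap.range (aw α)) q (aw α).rangeRestrict := by
  have hs : Function.Surjective (aw (LinearMap.id : A →ₗ[R] A)) := by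
    intro z
    have : LinearMap.range (aw (LinearMap.id : A →ₗ[R] A)) = ⊤ := by
      rw [eq_top_iff, ← exteriorPower.ιMulti_span, Submodule.span_le]
      rintro _ ⟨v, rfl⟩
      refine ⟨v 0 ⊗ₜ v 1, ?_⟩
      rw [aw_tmul, wd_def]
      congr 1; ext i; fin_cases i <;> rfl
    exact LinearMap.range_eq_top.1 this z
  have hid : ∀ z, aw α (α.lTensor A z) = wmap α (aw LinearMap.id z) := by
    intro z
    induction z with
    | zero => simp
    | add x y hx hy => simp only [map_add, hx, hy]
    | tmul a b => simp
  refine ⟨LinearMap.ker (aw (LinearMap.id : A →ₗ[R] A)), inferInstance, inferInstance, inferInstance,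
    ker_proj _ hs, α.lTensor A ∘ₗ Submodule.subtype _, ?_, ?_, ?_, ?_⟩
  · rintro ⟨x, hx⟩
    ext
    simp only [LinearMap.comp_apply, Submodule.subtype_apply, LinearMap.codRestrict_apply, LinearMap.rangeRestrict, hid, LinearMap.mem_ker.1 hx]
    simp
  · intro x hx
    have : x = 0 := Subtype.ext (Module.Flat.lTensor_preserves_injective_linearMap (M := A) α hα (by simpa using hx))
    exact ⟨0, fun r _ ↦ by simp [this]⟩
  · intro y hy
    have hy : aw α y = 0 := congrArg Subtype.val hy
    refine torIn_of_local _ _ _ fun p hp hpJ ↦ ?_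
    obtain ⟨s, τ, hs, hτ⟩ := h p hp hpJ
    refine ⟨s * s * s, pmul hp (pmul hp hs hs) hs, ?_⟩
    let sw : A ⊗[R] G →ₗ[R] A ⊗[R] A := (TensorProduct.comm R A A).toLinearMap ∘ₗ τ.lTensor A
    have h1 : ∀ z, s • z = dw τ (aw α z) + α.lTensor A (sw z) := by
      intro z
      induction z with
      | zero => simp
      | add x y hx hy => simp only [smul_add, map_add]; rw [hx, hy]; abel
      | tmul a b => simp [hτ, sw, smul_tmul']
    have h2 : s • y = α.lTensor A (sw y) := by rw [h1, hy, map_zero, zero_add]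
    have h3 : (s * s) • aw LinearMap.id (sw y) = 0 := by
      rw [← wmap_smul (τ ∘ₗ α) s hτ, wmap, exteriorPower.map_comp, LinearMap.comp_apply]
      have : wmap α (aw LinearMap.id (sw y)) = 0 := by
        rw [← hid, ← h2, map_smul, hy, smul_zero]
      rw [this, map_zero]
    refine ⟨⟨(s * s) • sw y, by rw [LinearMap.mem_ker, map_smul, h3]⟩, ?_⟩
    rw [LinearMap.comp_apply, Submodule.subtype_apply, map_smul, ← h2, mul_smul (s * s)]
  · rintro ⟨_, y, rfl⟩
    exact ⟨0, fun r _ ↦ ⟨r • y, Subtype.ext (map_smul (aw α) r y)⟩⟩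

lemma seq_quot (f : A →ₗ[R] G) (g : G →ₗ[R] B) (h : Function.Exact f g) (hg : Function.Surjective g) :
    TSeq J (LinearMap.range f).subtype g where
  hgf := by rintro ⟨_, y, rfl⟩; exact h.apply_apply_eq_zero y
  hf x hx := ⟨0, fun r _ ↦ by
    have : x = 0 := Subtype.ext hx
    simp [this]⟩
  hfg y hy := ⟨0, fun r _ ↦ ⟨r • ⟨y, (h y).1 hy⟩, rfl⟩⟩
  hg z := by
    obtain ⟨y, rfl⟩ := hg z
    exact ⟨0, fun r _ ↦ ⟨r • y, by simp⟩⟩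

lemma seq_ses (f : A →ₗ[R] G) (g : G →ₗ[R] B) (h : Function.Exact f g) (hf : Function.Injective f)
    (hg : Function.Surjective g) : TSeq J f g where
  hgf := h.apply_apply_eq_zero
  hf x hx := ⟨0, fun r _ ↦ by
    have : x = 0 := hf (by simpa using hx)
    simp [this]⟩
  hfg y hy := ⟨0, fun r _ ↦ by
    obtain ⟨x, rfl⟩ := (h y).1 hy
    exact ⟨r • x, by simp⟩⟩
  hg z := by
    obtain ⟨y, rfl⟩ := hg z
    exact ⟨0, fun r _ ↦ ⟨r • y, by simp⟩⟩

end Seqs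
end LCAux
end Part13

section Part14
open CategoryTheory Limits Opposite
open TensorProduct


namespace LCAux
section Line
variable {R : Type} [CommRing R] (J : Ideal R)
variable {M N L : Type} [AddCommGroup M] [Module R M] [AddCommGroup N] [Module R N]
  [AddCommGroup L] [Module R L]

lemma quasi_inv_of_iso (f : M →ₗ[R] N) (r₁ r₂ : R) (hk : ∀ z, f z = 0 → r₁ • z = 0)
    (hc : ∀ y, r₂ • y ∈ LinearMap.range f) :
    ∃ h : N →ₗ[R] M, (∀ y, f (h y) = (r₁ * r₂) • y) ∧ ∀ z, h (f z) = (r₁ * r₂) • z := by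
  let F : N →ₗ[R] LinearMap.range f := (r₂ • LinearMap.id).codRestrict _ hc
  let e := f.quotKerEquivRange
  let q : (M ⧸ LinearMap.ker f) →ₗ[R] M := (LinearMap.ker f).liftQ (r₁ • LinearMap.id) (fun z hz ↦ by
    simpa using hk z hz)
  let h : N →ₗ[R] M := q ∘ₗ e.symm.toLinearMap ∘ₗ F
  have key : ∀ y z, f z = r₂ • y → h y = r₁ • z := by
    intro y z hz
    have : F y = e ((LinearMap.ker f).mkQ z) := by
      ext
      simp [F, e, hz]
    simp only [h, LinearMap.comp_apply, this, LinearEquiv.coe_coe, LinearEquiv.symm_apply_apply, q]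
    simp
  refine ⟨h, fun y ↦ ?_, fun z ↦ ?_⟩
  · obtain ⟨z, hz⟩ := hc y
    rw [key y z hz, map_smul, hz, mul_smul]
  · rw [key (f z) (r₂ • z) (by simp), mul_smul]

/-- The determinant. -/
def det2 (R : Type) [CommRing R] : ⋀[R]^2 (Fin 2 → R) →ₗ[R] R :=
  wlift (LinearMap.mk₂ R (fun x y ↦ x 0 * y 1 - x 1 * y 0) (fun _ _ _ ↦ by simp; ring)
    (fun _ _ _ ↦ by simp; ring) (fun _ _ _ ↦ by simp; ring) (fun _ _ _ ↦ by simp; ring)) 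
    (fun x ↦ by simp; ring)

lemma det2_wd (x y : Fin 2 → R) : det2 R (wd x y) = x 0 * y 1 - x 1 * y 0 := by
  simp [det2]

/-- Inverse of the determinant. -/
def det2' (R : Type) [CommRing R] : R →ₗ[R] ⋀[R]^2 (Fin 2 → R) :=
  LinearMap.toSpanSingleton R _ (wd (Pi.single 0 1) (Pi.single 1 1))

lemma det2_det2' (r : R) : det2 R (det2' R r) = r := by
  simp [det2', det2_wd]

lemma det2'_det2 (z) : det2' R (det2 R z) = z := by
  refine wext' (f := det2' R ∘ₗ det2 R) (g := LinearMap.id) (fun x y ↦ ?_) z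
  have hx : ∀ x : Fin 2 → R, x = x 0 • Pi.single 0 1 + x 1 • Pi.single 1 1 := by
    intro x; ext i; fin_cases i <;> simp
  simp only [LinearMap.comp_apply, det2_wd, det2', LinearMap.toSpanSingleton_apply, LinearMap.id_apply]
  conv_rhs => rw [hx x, hx y]
  simp only [map_add, map_smul, LinearMap.add_apply, LinearMap.smul_apply, wd_self]
  rw [wd_swap (Pi.single 1 1) (Pi.single 0 1)]
  module

/-- `M` and `N` are isomorphic locally away from `J`. -/
def LocEq (M N : Type) [AddCommGroup M] [Module R M] [AddCommGroup N] [Module R N] : Prop :=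
  ∀ p : Ideal R, p.IsPrime → p ≠ J → ∃ (s : R) (a : M →ₗ[R] N) (b : N →ₗ[R] M), s ∉ p ∧ 
    (∀ x, a (b x) = s • x) ∧ (∀ y, b (a y) = s • y)

variable {J}
lemma LocEq.trans (h : LocEq J M N) (h' : LocEq J N L) : LocEq J M L := by
  intro p hp hpJ
  obtain ⟨s, a, b, hs, hab, hba⟩ := h p hp hpJ
  obtain ⟨s', a', b', hs', hab', hba'⟩ := h' p hp hpJ
  refine ⟨s * s', a' ∘ₗ a, b ∘ₗ b', pmul hp hs hs', fun x ↦ ?_, fun x ↦ ?_⟩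
  · simp [hab, hab', mul_smul]
  · simp [hba, hba', mul_smul]; rw [smul_comm]

lemma LocEq.wedge (h : LocEq J M N) : LocEq J (⋀[R]^2 M) (⋀[R]^2 N) := by
  intro p hp hpJ
  obtain ⟨s, a, b, hs, hab, hba⟩ := h p hp hpJ
  refine ⟨s * s, wmap a, wmap b, pmul hp hs hs, fun x ↦ ?_, fun x ↦ ?_⟩
  · rw [← wmap_smul (a ∘ₗ b) s hab]
    simp only [wmap]
    rw [exteriorPower.map_comp]; rfl
  · rw [← wmap_smul (b ∘ₗ a) s hba]
    simp only [wmap]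
    rw [exteriorPower.map_comp]; rfl

lemma locEq_det2 : LocEq J (⋀[R]^2 (Fin 2 → R)) R := by
  intro p hp hpJ
  exact ⟨1, det2 R, det2' R, fun h ↦ hp.ne_top ((Ideal.eq_top_iff_one _).2 h),
    fun x ↦ by rw [det2_det2', one_smul], fun x ↦ by rw [det2'_det2, one_smul]⟩

lemma locEq_of_sheafIso (hJ : J.IsMaximal) (f : M →ₗ[R] N) 
    (hk : ∃ c : ℕ, ∀ r ∈ J ^ c, ∀ z, f z = 0 → r • z = 0)
    (hc : ∃ c : ℕ, ∀ r ∈ J ^ c, ∀ y, r • y ∈ LinearMap.range f) : LocEq J M N := by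
  intro p hp hpJ
  obtain ⟨c, hk⟩ := hk
  obtain ⟨c', hc⟩ := hc
  obtain ⟨x, hx, hxp⟩ := exists_not_mem J hJ p hpJ
  obtain ⟨h, h1, h2⟩ := quasi_inv_of_iso f (x ^ c) (x ^ c') (hk _ (Ideal.pow_mem_pow hx c))
    (hc _ (Ideal.pow_mem_pow hx c'))
  exact ⟨_, f, h, pmul hp (fun h ↦ hxp (hp.mem_of_pow_mem _ h)) (fun h ↦ hxp (hp.mem_of_pow_mem _ h)), h1, h2⟩

lemma exists_gcd [IsDomain R] [UniqueFactorizationMonoid R] [IsNoetherianRing R] (u : L →ₗ[R] R) :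
    ∃ d : R, (∀ y, d ∣ u y) ∧ ∀ t c, (∀ y, t ∣ c * u y) → t ∣ c * d := by
  classical
  let : StrongNormalizationMonoid R := UniqueFactorizationMonoid.strongNormalizationMonoid
  let : NormalizedGCDMonoid R := UniqueFactorizationMonoid.toNormalizedGCDMonoid R
  obtain ⟨S, hS⟩ := IsNoetherian.noetherian (LinearMap.range u)
  refine ⟨S.gcd id, fun y ↦ ?_, fun t c h ↦ ?_⟩
  · have h1 : LinearMap.range u ≤ Ideal.span {S.gcd id} := by
      rw [← hS, Submodule.span_le]
      intro x hx
      exact Ideal.mem_span_singleton.2 (Finset.gcd_dvd (f := id) hx)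
    exact Ideal.mem_span_singleton.1 (h1 ⟨y, rfl⟩)
  · have h1 : t ∣ S.gcd (fun x ↦ c * id x) := by
      refine Finset.dvd_gcd fun x hx ↦ ?_
      have : x ∈ LinearMap.range u := by rw [← hS]; exact Submodule.subset_span hx
      obtain ⟨y, rfl⟩ := this
      exact h y
    exact h1.trans (Finset.gcd_mul_left' S id c).dvd

/-- A line bundle is trivial. -/
lemma line_trivial [IsDomain R] [UniqueFactorizationMonoid R] [IsNoetherianRing R]
    (hJ : J ≠ ⊥) (h : LocEq J L R) :
    ∃ φ : L →ₗ[R] R, (∀ x, φ x = 0 → Tor1 J x) ∧ ∀ y, TorIn J (LinearMap.range φ) y := by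
  obtain ⟨f0, u, v, hf0, huv, hvu⟩ := h ⊥ Ideal.isPrime_bot hJ.symm
  have hf0 : f0 ≠ 0 := hf0
  obtain ⟨d, hd, hd'⟩ := exists_gcd u
  have hd0 : d ≠ 0 := by
    rintro rfl
    have h1 := hd (v 1)
    rw [huv, zero_dvd_iff] at h1
    simp at h1
    exact hf0 h1
  choose φ hφ using hd
  let Φ : L →ₗ[R] R :=
    { toFun := φ
      map_add' := fun x y ↦ mul_left_cancel₀ hd0 (by rw [mul_add, ← hφ, ← hφ, ← hφ, map_add])
      map_smul' := fun r x ↦ mul_left_cancel₀ hd0 (by 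
        rw [← hφ, map_smul, hφ x]; simp; ring) }
  have hΦ : ∀ x, u x = d * Φ x := hφ
  refine ⟨Φ, fun x hx ↦ ?_, fun y ↦ ?_⟩
  · refine tor1_of_local _ _ fun p hp hpJ ↦ ?_
    obtain ⟨s, a, b, hs, hab, hba⟩ := h p hp hpJ
    refine ⟨s, hs, ?_⟩
    have h1 : f0 • x = 0 := by rw [← hvu, hΦ, hx, mul_zero, map_zero]
    have h2 : f0 * a x = 0 := by rw [← smul_eq_mul, ← map_smul, h1, map_zero]
    rw [← hba, (mul_eq_zero.1 h2).resolve_left hf0, map_zero]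
  · refine torIn_of_local _ _ _ fun p hp hpJ ↦ ?_
    obtain ⟨s, a, b, hs, hab, hba⟩ := h p hp hpJ
    refine ⟨s, hs, ?_⟩
    have h1 : ∀ y, s * Φ y = a y * Φ (b 1) := by
      intro y
      rw [← smul_eq_mul, ← map_smul, ← hba, ← smul_eq_mul, ← map_smul, ← map_smul, smul_eq_mul, mul_one]
    have h2 : d * Φ (b 1) ∣ s * d := hd' _ _ fun y ↦ by
      rw [hΦ, show s * (d * Φ y) = d * (s * Φ y) by ring, h1]
      exact ⟨a y, by ring⟩
    rw [mul_comm s, mul_dvd_mul_iff_left hd0] at h2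
    obtain ⟨c, hc⟩ := h2
    refine ⟨(c * y) • b 1, ?_⟩
    rw [map_smul, hc]; simp; ring

end Line
end LCAux
end Part14

section Part15
open CategoryTheory Limits Opposite
open TensorProduct


namespace LCAux
section Assembly
variable {R : Type} [CommRing R] [IsNoetherianRing R] (J : Ideal R) (n : ℕ) 

lemma isoA [IsDomain R] [UniqueFactorizationMonoid R] (hJ : J ≠ ⊥)
    (hv : ∀ i ≤ n, Subsingleton (HL J i R))
    {A G E' E : Type} [AddCommGroup A] [Module R A] [AddCommGroup G] [Module R G]
    [AddCommGroup E'] [Module R E'] [AddCommGroup E] [Module R E]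
    [Module.Free R A] [Module.Finite R A] (α : A →ₗ[R] G) (π : G →ₗ[R] E')
    (hα : Function.Injective α) (hπ : Function.Surjective π) (hex : Function.Exact α π)
    (hret : LocRet J α) (hline : LocEq J (⋀[R]^2 E') R)
    (i : ℕ) (hi : i + 4 ≤ n) (φ : HL J (i+3) E' ≃ₗ[R] HL J (i+3) E) :
    Nonempty (HL J (i+3) (⋀[R]^2 G) ≃ₗ[R] A ⊗[R] HL J (i+3) E) := by
  obtain ⟨f, hf1, hf2⟩ := line_trivial hJ hline
  have hL : ∀ j, j + 2 ≤ n → Subsingleton (HL J (j+2) (⋀[R]^2 E')) := fun j hj ↦ by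
    have := hv _ hj
    exact (bij_of_sheafIso J f hf1 hf2 j).1.subsingleton
  have hvp : ∀ (M : Type) [AddCommGroup M] [Module R M] [Module.Finite R M] [Module.Projective R M] (j : ℕ),
      j ≤ n → Subsingleton (HL J j M) := fun M _ _ _ _ j hj ↦ by
    have := hv _ hj
    exact HL_proj_vanish J j M
  have := hL i (by omega)
  have := hL (i+1) (by omega)
  let e1 := LinearEquiv.ofBijective _
    ((seq_quot J (aw α) (wmap π) (wedge_right_exact α π hπ hex) (wmap_surj hπ)).bij_left i)
  obtain ⟨S2, _, _, _, _, q, hq⟩ := seq_A J α hα hret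
  have := hvp S2 (i+1+2) (by omega)
  have := hvp S2 (i+1+3) (by omega)
  let e2 := LinearEquiv.ofBijective _ (hq.bij_right (i+1))
  have := hvp A (i+1+2) (by omega)
  have := hvp A (i+1+3) (by omega)
  let e3 := LinearEquiv.ofBijective _ ((seq_ses J α π hex hα hπ).bij_right (i+1))
  exact ⟨e1.symm ≪≫ₗ e2.symm ≪≫ₗ HLtensor J (i+3) A G ≪≫ₗ LinearEquiv.lTensor A (e3 ≪≫ₗ φ)⟩

lemma isoB (hv : ∀ i ≤ n, Subsingleton (HL J i R))
    {P B S2 E : Type} [AddCommGroup P] [Module R P] [AddCommGroup B] [Module R B]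
    [AddCommGroup S2] [Module R S2] [AddCommGroup E] [Module R E]
    [Module.Free R B] [Module.Finite R B] [Module.Finite R S2] [Module.Projective R S2]
    (β : P →ₗ[R] B) (hβ : LocSec J β) (q : B ⊗[R] P →ₗ[R] S2) (hq : TSeq J (LinearMap.ker q).subtype q)
    (i : ℕ) (hi : i + 3 ≤ n) (φ : HL J (i+3) (LinearMap.ker β) ≃ₗ[R] HL J (i+3) E) :
    Nonempty (HL J (i+3) (LinearMap.ker q) ≃ₗ[R] B ⊗[R] HL J (i+3) E) := by
  have hvp : ∀ (M : Type) [AddCommGroup M] [Module R M] [Module.Finite R M] [Module.Projective R M] (j : ℕ),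
      j ≤ n → Subsingleton (HL J j M) := fun M _ _ _ _ j hj ↦ by
    have := hv _ hj
    exact HL_proj_vanish J j M
  have := hvp S2 (i+2) (by omega)
  have := hvp S2 (i+3) (by omega)
  let e1 := LinearEquiv.ofBijective _ (hq.bij_left i)
  have := hvp B (i+2) (by omega)
  have := hvp B (i+3) (by omega)
  let e2 := LinearEquiv.ofBijective _ ((seq_ker J β hβ).bij_left i)
  exact ⟨e1 ≪≫ₗ HLtensor J (i+3) B P ≪≫ₗ LinearEquiv.lTensor B (e2.symm ≪≫ₗ φ)⟩

lemma main [IsDomain R] [UniqueFactorizationMonoid R] (hJ : J ≠ ⊥)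
    (hv : ∀ i ≤ n, Subsingleton (HL J i R))
    {A B P E' E : Type} [AddCommGroup A] [Module R A] [AddCommGroup B] [Module R B]
    [AddCommGroup P] [Module R P]
    [AddCommGroup E'] [Module R E'] [AddCommGroup E] [Module R E]
    [Module.Free R A] [Module.Finite R A] [Module.Free R B] [Module.Finite R B] [Module.Finite R P]
    (β : P →ₗ[R] B) (α : A →ₗ[R] LinearMap.ker β) (π : LinearMap.ker β →ₗ[R] E')
    (hα : Function.Injective α) (hπ : Function.Surjective π) (hex : Function.Exact α π)
    (hret : LocRet J α) (hβ : LocSec J β) (hline : LocEq J (⋀[R]^2 E') R)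
    (u : E' →ₗ[R] E) (hu : ∀ x, u x = 0 → Tor1 J x) (hu' : ∀ y, TorIn J (LinearMap.range u) y)
    (i : ℕ) (hi : i + 4 ≤ n) :
    ∃ (f : A ⊗[R] (HL J (i+3) E) →ₗ[R] HL J (i+3) (⋀[R]^2 P))
      (g : HL J (i+3) (⋀[R]^2 P) →ₗ[R] B ⊗[R] (HL J (i+3) E)),
      Function.Exact f g ∧
      (1 ≤ i → Subsingleton (HL J (i+2) E) → Function.Injective f) ∧
      (i + 5 ≤ n → Subsingleton (HL J (i+4) E) → Function.Surjective g) := by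
  have hvp : ∀ (M : Type) [AddCommGroup M] [Module R M] [Module.Finite R M] [Module.Projective R M] (j : ℕ),
      j ≤ n → Subsingleton (HL J j M) := fun M _ _ _ _ j hj ↦ by
    have := hv _ hj
    exact HL_proj_vanish J j M
  let φ : ∀ j, HL J (j+3) E' ≃ₗ[R] HL J (j+3) E := fun j ↦
    LinearEquiv.ofBijective _ (bij_of_sheafIso J u hu hu' (j+1))
  have ψ : ∀ j, j + 4 ≤ n → Nonempty (HL J (j+3) (LinearMap.ker β) ≃ₗ[R] HL J (j+3) E) := fun j hj ↦ by
    have := hvp A (j+1+2) (by omega)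
    have := hvp A (j+1+3) (by omega)
    exact ⟨LinearEquiv.ofBijective _ ((seq_ses J α π hex hα hπ).bij_right (j+1)) ≪≫ₗ φ j⟩
  obtain ⟨S2, _, _, _, _, q, g, hq, hg⟩ := seq_B J β hβ
  have IA : ∀ j, j + 4 ≤ n → Nonempty (HL J (j+3) (⋀[R]^2 (LinearMap.ker β)) ≃ₗ[R] A ⊗[R] HL J (j+3) E) :=
    fun j hj ↦ isoA J n hJ hv α π hα hπ hex hret hline j hj (φ j)
  have IB : ∀ j, j + 4 ≤ n → Nonempty (HL J (j+3) (LinearMap.ker q) ≃ₗ[R] B ⊗[R] HL J (j+3) E) := 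
    fun j hj ↦ by
      obtain ⟨ψ⟩ := ψ j hj
      exact isoB J n hv β hβ q hq j (by omega) ψ
  obtain ⟨ea⟩ := IA i hi
  obtain ⟨eb⟩ := IB i hi
  have hLES := les_of_torsion J _ _ hg.hgf hg.hf hg.hfg hg.hg
  refine ⟨Hm J (i+3) (wmap (LinearMap.ker β).subtype) ∘ₗ ea.symm.toLinearMap, 
    eb.toLinearMap ∘ₗ Hm J (i+3) g, ?_, ?_, ?_⟩
  · obtain ⟨h1, -⟩ := hLES (i+1)
    intro y
    have h2 := h1 y
    simp only [LinearMap.comp_apply, LinearEquiv.coe_coe, LinearEquiv.map_eq_zero_iff]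
    refine h2.trans ⟨?_, ?_⟩
    · rintro ⟨x, hx⟩
      exact ⟨ea x, by simpa using hx⟩
    · rintro ⟨x, hx⟩
      exact ⟨ea.symm x, hx⟩
  · intro h1 hs
    obtain ⟨k, rfl⟩ : ∃ k, i = k + 1 := ⟨i - 1, by omega⟩
    obtain ⟨-, δ, -, h2⟩ := hLES (k+1)
    obtain ⟨eb'⟩ := IB k (by omega)
    have : Subsingleton (HL J (k+3) E) := hs
    have : Subsingleton (B ⊗[R] HL J (k+3) E) := inferInstance
    have : Subsingleton (HL J (k+1+2) (LinearMap.ker q)) := eb'.injective.subsingleton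
    exact (inj_of_exact_zero h2).comp ea.symm.injective
  · intro h1 hs
    obtain ⟨-, δ, h2, -⟩ := hLES (i+1)
    obtain ⟨ea'⟩ := IA (i+1) (by omega)
    have : Subsingleton (HL J (i+1+3) E) := hs
    have : Subsingleton (A ⊗[R] HL J (i+1+3) E) := inferInstance
    have : Subsingleton (HL J (i+1+3) (⋀[R]^2 (LinearMap.ker β))) := ea'.injective.subsingleton
    exact eb.surjective.comp (surj_of_exact_zero h2)

lemma vars_maximal (K : Type) [Field K] (n : ℕ) :
    (Ideal.span (Set.range (MvPolynomial.X : Fin (n+1) → MvPolynomial (Fin (n+1)) K))).IsMaximal := by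
  have : Ideal.span (Set.range (MvPolynomial.X : Fin (n+1) → MvPolynomial (Fin (n+1)) K)) =
      RingHom.ker (MvPolynomial.constantCoeff : MvPolynomial (Fin (n+1)) K →+* K) := by
    apply le_antisymm
    · rw [Ideal.span_le]
      rintro _ ⟨i, rfl⟩
      simp [RingHom.mem_ker]
    · intro p hp
      rw [← Set.image_univ, MvPolynomial.mem_ideal_span_X_image]
      intro m hm
      by_contra! hc
      have h0 : m = 0 := by ext i; simpa using hc i (Set.mem_univ _)
      rw [MvPolynomial.mem_support_iff, h0] at hm
      exact hm (by simpa [RingHom.mem_ker, MvPolynomial.constantCoeff_eq] using hp)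
  rw [this]
  exact RingHom.ker_isMaximal_of_surjective _ (fun x ↦ ⟨MvPolynomial.C x, by simp⟩)

end Assembly
end LCAux
end Part15

end

/-- For a rank two bundle `E` on `ℙⁿ` with minimal monad
`0 → A → P → B → 0` (`A, B` free) and `N_t = H^t_*(E)`, for `2 ≤ t ≤ n-2` there is an
exact sequence `A ⊗ N_t → H^t_*(Λ²P) → B ⊗ N_t` of graded `S`-modules, injective on
the left if `t ≥ 3` and `N_{t-1} = 0`, and surjective on the right if `t ≤ n-3` and
`N_{t+1} = 0`. -/
theorem wedge2_cohomology_sequence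
    (K : Type) [Field K] (n : ℕ)
    (A B P : Type) [AddCommGroup A] [Module (PolyS K n) A]
    [AddCommGroup B] [Module (PolyS K n) B] [AddCommGroup P] [Module (PolyS K n) P]
    (hAfree : Module.Free (PolyS K n) A) (hAfin : Module.Finite (PolyS K n) A)
    (hBfree : Module.Free (PolyS K n) B) (hBfin : Module.Finite (PolyS K n) B)
    (hP : IsBundleModule K n P)
    (hP1 : Subsingleton (Hstar K n 1 P))
    (hPn1 : Subsingleton (Hstar K n (n-1) P))
    (α : A →ₗ[PolyS K n] P) (β : P →ₗ[PolyS K n] B)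
    (hβα : β.comp α = 0)
    (hαinj : Function.Injective α)
    (hsubbundle : ∀ p : PrimeSpectrum (PolyS K n), p.asIdeal ≠ irrel K n →
      Module.Free (Localization.AtPrime p.asIdeal)
        (LocalizedModule p.asIdeal.primeCompl (P ⧸ LinearMap.range α)))
    (hβsurj : ∃ c : ℕ, (irrel K n) ^ c ≤
      Module.annihilator (PolyS K n) (B ⧸ LinearMap.range β))
    (hαmin : LinearMap.range α ≤ (irrel K n) • (⊤ : Submodule (PolyS K n) P))
    (hβmin : LinearMap.range β ≤ (irrel K n) • (⊤ : Submodule (PolyS K n) B))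
    (E : Type) [AddCommGroup E] [Module (PolyS K n) E]
    (hcoh : ∃ f : MonadHomology α β →ₗ[PolyS K n] E, IsSheafIso K n f)
    (hE : IsRankTwoBundleModule K n E)
    (t : ℕ) (ht1 : 2 ≤ t) (ht2 : t ≤ n - 2) :
    ∃ (f : TensorProduct (PolyS K n) A ↥(Hstar K n t E) →ₗ[PolyS K n]
        ↥(Hstar K n t (⋀[PolyS K n]^2 P)))
      (g : ↥(Hstar K n t (⋀[PolyS K n]^2 P)) →ₗ[PolyS K n]
        TensorProduct (PolyS K n) B ↥(Hstar K n t E)),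
      Function.Exact f g ∧
      (3 ≤ t → Subsingleton (Hstar K n (t-1) E) → Function.Injective f) ∧
      (t ≤ n - 3 → Subsingleton (Hstar K n (t+1) E) → Function.Surjective g) := by
  have hmax : (irrel K n).IsMaximal := LCAux.vars_maximal K n
  have hX : ∀ k, MvPolynomial.X k ∈ irrel K n := fun k ↦ Ideal.subset_span ⟨k, rfl⟩
  have hbot : irrel K n ≠ ⊥ := fun h ↦ by
    have h0 := hX 0
    rw [h] at h0
    exact MvPolynomial.X_ne_zero (R := K) (0 : Fin (n+1)) h0
  have hv := LCAux.HL_S_vanish K n (irrel K n) hX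
  have hPfin := hP.finite
  have hEfin := hE.finite
  obtain ⟨u, ⟨c1, hc1⟩, ⟨c2, hc2⟩⟩ := hcoh
  obtain ⟨c, hc⟩ := hβsurj
  have hu1 : ∀ r ∈ irrel K n ^ c1, ∀ x, u x = 0 → r • x = 0 := fun r hr x hx ↦
    congrArg Subtype.val (Module.mem_annihilator.1 (hc1 hr) (⟨x, hx⟩ : LinearMap.ker u))
  have hu2 : ∀ r ∈ irrel K n ^ c2, ∀ y, r • y ∈ LinearMap.range u := fun r hr y ↦
    (Submodule.Quotient.mk_eq_zero _).1
      (Module.mem_annihilator.1 (hc2 hr) (Submodule.Quotient.mk y : E ⧸ LinearMap.range u))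
  have hb : ∀ r ∈ irrel K n ^ c, ∀ y, r • y ∈ LinearMap.range β := fun r hr y ↦
    (Submodule.Quotient.mk_eq_zero _).1
      (Module.mem_annihilator.1 (hc hr) (Submodule.Quotient.mk y : B ⧸ LinearMap.range β))
  have hβα' : ∀ a, α a ∈ LinearMap.ker β := fun a ↦ LinearMap.congr_fun hβα a
  let α' : A →ₗ[PolyS K n] LinearMap.ker β := α.codRestrict _ hβα'
  let π : LinearMap.ker β →ₗ[PolyS K n] MonadHomology α β :=
    ((LinearMap.range α).comap (LinearMap.ker β).subtype).mkQ
  have hπ : Function.Surjective π := Submodule.mkQ_surjective _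
  have hex : Function.Exact α' π := by
    intro y
    refine (Submodule.Quotient.mk_eq_zero
      ((LinearMap.range α).comap (LinearMap.ker β).subtype)).trans ⟨?_, ?_⟩
    · rintro ⟨a, ha⟩
      exact ⟨a, Subtype.ext ha⟩
    · rintro ⟨a, rfl⟩
      exact ⟨a, rfl⟩
  have hα' : Function.Injective α' := fun a b h ↦ hαinj (congrArg Subtype.val h)
  have hret : LCAux.LocRet (irrel K n) α' := by
    intro p hp hpJ
    obtain ⟨s, τ, hs, hτ⟩ := LCAux.quasi_retract α hαinj p (hsubbundle ⟨p, hp⟩ hpJ)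
    exact ⟨s, τ ∘ₗ (LinearMap.ker β).subtype, hs, hτ⟩
  have hsec : LCAux.LocSec (irrel K n) β := fun p hp hpJ ↦
    LCAux.quasi_section (irrel K n) hmax p hpJ β c hb
  have hE2 : LCAux.LocEq (irrel K n) E (Fin 2 → PolyS K n) := fun p hp hpJ ↦
    LCAux.quasi_free2 p (hE.locFree ⟨p, hp⟩ hpJ) (hE.rank2 ⟨p, hp⟩ hpJ)
  have hline : LCAux.LocEq (irrel K n) (⋀[PolyS K n]^2 (MonadHomology α β)) (PolyS K n) :=
    ((LCAux.locEq_of_sheafIso hmax u ⟨c1, hu1⟩ ⟨c2, hu2⟩).trans hE2).wedge.trans LCAux.locEq_det2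
  obtain ⟨i, rfl⟩ : ∃ i, t = i + 2 := ⟨t - 2, by omega⟩
  obtain ⟨f, g, h1, h2, h3⟩ := LCAux.main (irrel K n) n hbot hv β α' π hα' hπ hex hret hsec hline u
    (fun x hx ↦ ⟨c1, fun r hr ↦ hu1 r hr x hx⟩) (fun y ↦ ⟨c2, fun r hr ↦ hu2 r hr y⟩) i (by omega)
  exact ⟨f, g, h1, fun h h' ↦ h2 (by omega) h', fun h h' ↦ h3 (by omega) h'⟩
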